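/- arXiv:2204.09416 — 3 statements merged into one kernel-verified Lean document; each statement's English description precedes it below -/
import Mathlib

section
/- Let a_1,...,a_m be i.i.d. N(0, I_n) vectors and A = (1/m) Σ_j a_j a_j^T. For any 0 < ε ≤ 1, if m ≥ C ε⁻² n then P(‖A − I‖_op > ε) ≤ exp(−c m ε²), for universal constants C, c > 0. -/
open MeasureTheory ProbabilityTheory

noncomputable def stdGaussianMat (m n : ℕ) : Measure (Fin m → Fin n → ℝ) :=
  Measure.pi fun _ => Measure.pi fun _ => gaussianReal 0 1

/-!
Write `S = A - 1`. At a unit eigenvector `x` whose eigenvalue has modulus `‖S‖`, the quadratic form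
of `S` is stationary on the sphere, so replacing `x` by a unit vector `y` at distance at most `δ`
changes it only by `2 δ² ‖S‖`. Hence the maximum of `|⟪S y, y⟫|` over a `1/2`-net of the sphere is
already at least `‖S‖ / 2`, and such a net needs at most `5 ^ n` points. For one unit vector `y`,
`m ⟪S y, y⟫ = ∑ⱼ (⟪y, aⱼ⟫² - 1)` is a centred chi-square variable, whose explicit moment generating
function gives `P(|⟪S y, y⟫| ≥ ε / 2) ≤ 2 exp(-m ε² / 64)` by Chernoff's bound. The union bound
over the net costs the factor `5 ^ n`, which half of the exponent absorbs once `m ≥ 384 ε⁻² n`.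
-/

open InnerProductSpace Metric Module
open scoped NNReal RealInnerProductSpace

section Net

variable {E : Type*} [NormedAddCommGroup E]

lemma card_le_of_isSeparated_half_of_subset_closedBall [NormedSpace ℝ E] [FiniteDimensional ℝ E]
    {s : Finset E} {c : E} {r : ℝ≥0} (hr : 0 < r) (hsc : (s : Set E) ⊆ closedBall c r)
    (hs : IsSeparated (r / 2 : ℝ≥0) (s : Set E)) : s.card ≤ 5 ^ finrank ℝ E := by
  classical
  have hr' : (0 : ℝ) < r := hr
  let f : E → E := fun x ↦ (2 / r : ℝ) • (x - c)
  have hf : f.Injective :=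
    (smul_right_injective E (by positivity)).comp (sub_left_injective (b := c))
  rw [← Finset.card_image_of_injective s hf]
  refine Besicovitch.card_le_of_separated _ ?_ ?_
  · simp only [Finset.forall_mem_image, f, norm_smul]
    intro x hx
    have hxc : ‖x - c‖ ≤ r := by simpa [dist_eq_norm] using hsc hx
    rw [Real.norm_of_nonneg (by positivity), div_mul_eq_mul_div, div_le_iff₀ hr']
    gcongr
  · simp only [Finset.forall_mem_image, f, ← smul_sub, sub_sub_sub_cancel_right, norm_smul]
    intro x hx y hy hxy
    have hsep : r / 2 < ‖x - y‖ := by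
      have : ((r / 2 : ℝ≥0) : ENNReal) < edist x y := hs hx hy (ne_of_apply_ne f hxy)
      rw [edist_nndist, ENNReal.coe_lt_coe] at this
      rw [← dist_eq_norm]
      exact_mod_cast this
    rw [Real.norm_of_nonneg (by positivity), div_mul_eq_mul_div, le_div_iff₀ hr']
    linarith

lemma packingNumber_half_le_of_subset_closedBall [NormedSpace ℝ E] [FiniteDimensional ℝ E]
    {A : Set E} {c : E} {r : ℝ≥0} (hr : 0 < r) (hA : A ⊆ closedBall c r) :
    packingNumber (r / 2) A ≤ (5 ^ finrank ℝ E : ℕ) := by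
  refine iSup₂_le fun s hsA ↦ iSup_le fun hs ↦ ?_
  by_contra! hcard
  obtain ⟨t, hts, ht⟩ := Set.exists_subset_encard_eq (Order.add_one_le_of_lt hcard)
  have htfin : t.Finite := Set.finite_of_encard_eq_coe (k := 5 ^ finrank ℝ E + 1) (mod_cast ht)
  lift t to Finset E using htfin
  have := card_le_of_isSeparated_half_of_subset_closedBall hr ((hts.trans hsA).trans hA)
    (hs.subset hts)
  rw [Set.encard_coe_eq_coe_finsetCard] at ht
  norm_cast at ht
  omega

lemma exists_isCover_half_card_le [NormedSpace ℝ E] [FiniteDimensional ℝ E]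
    {A : Set E} {c : E} {r : ℝ≥0} (hr : 0 < r) (hA : A ⊆ closedBall c r) :
    ∃ N : Finset E, (N : Set E) ⊆ A ∧ IsCover (r / 2) A N ∧ N.card ≤ 5 ^ finrank ℝ E := by
  have hcov : coveringNumber (r / 2) A ≤ (5 ^ finrank ℝ E : ℕ) :=
    (coveringNumber_le_packingNumber _ A).trans (packingNumber_half_le_of_subset_closedBall hr hA)
  obtain ⟨N, hNA, hNfin, hN, hcard⟩ :=
    exists_set_encard_eq_coveringNumber (ne_top_of_le_ne_top (ENat.natCast_ne_top _) hcov)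
  lift N to Finset E using hNfin
  rw [← hcard, Set.encard_coe_eq_coe_finsetCard] at hcov
  exact ⟨N, hNA, hN, by exact_mod_cast hcov⟩

lemma exists_norm_eq_one_apply_eq_smul_norm_eq {𝕜 : Type*} [RCLike 𝕜] [InnerProductSpace 𝕜 E]
    [FiniteDimensional 𝕜 E] [Nontrivial E] {T : E →L[𝕜] E} (hT : T.IsSymmetric) :
    ∃ x : E, ∃ l : 𝕜, ‖x‖ = 1 ∧ T x = l • x ∧ ‖l‖ = ‖T‖ := by
  have := FiniteDimensional.complete 𝕜 E
  have hne : (spectrum 𝕜 T).Nonempty :=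
    ⟨_, (ContinuousLinearMap.spectrum_eq (f := T)).symm ▸
      hT.hasEigenvalue_iSup_of_finiteDimensional.mem_spectrum⟩
  obtain ⟨l, hl, hlT⟩ := spectrum.exists_nnnorm_eq_spectralRadius_of_nonempty hne
  rw [T.spectralRadius_eq_nnnorm hT.isSelfAdjoint] at hlT
  have hnorm : ‖l‖₊ = ‖T‖₊ := ENNReal.coe_injective hlT
  rw [ContinuousLinearMap.spectrum_eq, ← Module.End.hasEigenvalue_iff_mem_spectrum] at hl
  obtain ⟨v, hv⟩ := hl.exists_hasEigenvector
  refine ⟨(‖v‖⁻¹ : 𝕜) • v, l, norm_smul_inv_norm hv.2, ?_, congrArg NNReal.toReal hnorm⟩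
  rw [map_smul, ← ContinuousLinearMap.coe_coe, hv.apply_eq_smul, smul_comm]

variable [InnerProductSpace ℝ E] {T : E →L[ℝ] E}

lemma exists_mem_mul_norm_le_abs_inner [FiniteDimensional ℝ E] [Nontrivial E]
    (hT : T.IsSymmetric) {N : Set E} {δ : ℝ≥0} (hN : N ⊆ sphere 0 1)
    (hcov : IsCover δ (sphere 0 1) N) : ∃ y ∈ N, (1 - 2 * δ ^ 2) * ‖T‖ ≤ |⟪T y, y⟫| := by
  obtain ⟨x, l, hx, hTx, hl⟩ := exists_norm_eq_one_apply_eq_smul_norm_eq hT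
  rw [Real.norm_eq_abs] at hl
  obtain ⟨y, hyN, hxy⟩ := Set.mem_iUnion₂.1 (isCover_iff_subset_iUnion_closedBall.1 hcov (by simpa))
  have hy : ‖y‖ = 1 := by simpa using hN hyN
  have hd : ‖y - x‖ ≤ δ := by simpa [dist_eq_norm, norm_sub_rev] using hxy
  have hexpand : ⟪T y, y⟫ = l + (⟪T (y - x), y - x⟫ - l * ‖y - x‖ ^ 2) := by
    have hsymm : ⟪T y, x⟫ = l * ⟪y, x⟫ := by
      rw [hT.apply_clm, hTx, inner_smul_right]
    rw [norm_sub_sq_real, hx, hy, map_sub, hTx]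
    simp only [inner_sub_left, inner_sub_right, inner_smul_left, hsymm, real_inner_comm y x,
      real_inner_self_eq_norm_sq, hx, conj_trivial]
    ring
  have hremainder : |⟪T (y - x), y - x⟫ - l * ‖y - x‖ ^ 2| ≤ 2 * δ ^ 2 * ‖T‖ := by
    calc |⟪T (y - x), y - x⟫ - l * ‖y - x‖ ^ 2|
        ≤ |⟪T (y - x), y - x⟫| + |l * ‖y - x‖ ^ 2| := abs_sub _ _
      _ ≤ ‖T‖ * ‖y - x‖ * ‖y - x‖ + ‖T‖ * ‖y - x‖ ^ 2 := by
        rw [abs_mul, hl, abs_sq]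
        gcongr
        exact (abs_real_inner_le_norm _ _).trans (by gcongr; exact T.le_opNorm _)
      _ = 2 * ‖y - x‖ ^ 2 * ‖T‖ := by ring
      _ ≤ 2 * δ ^ 2 * ‖T‖ := by gcongr
  refine ⟨y, hyN, ?_⟩
  have htriangle := abs_sub_abs_le_abs_sub l (-(⟪T (y - x), y - x⟫ - l * ‖y - x‖ ^ 2))
  rw [abs_neg, sub_neg_eq_add, ← hexpand, hl] at htriangle
  linarith

lemma measure_opNorm_gt_two_mul_le [FiniteDimensional ℝ E] [Nontrivial E] {Ω : Type*}
    {mΩ : MeasurableSpace Ω} {P : Measure Ω} [IsFiniteMeasure P] {T : Ω → E →L[ℝ] E}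
    (hT : ∀ ω, (T ω).IsSymmetric) {b p : ℝ}
    (hp : ∀ y, ‖y‖ = 1 → P.real {ω | b ≤ |⟪T ω y, y⟫|} ≤ p) :
    P.real {ω | 2 * b < ‖T ω‖} ≤ 5 ^ finrank ℝ E * p := by
  obtain ⟨N, hN, hcov, hcard⟩ := exists_isCover_half_card_le one_pos
    (sphere_subset_closedBall (x := (0 : E)) (ε := 1))
  have hsub : {ω | 2 * b < ‖T ω‖} ⊆ ⋃ y ∈ N, {ω | b ≤ |⟪T ω y, y⟫|} := fun ω hω ↦ by
    obtain ⟨y, hy, hyT⟩ := exists_mem_mul_norm_le_abs_inner (hT ω) hN hcov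
    have hb : 2 * b < ‖T ω‖ := hω
    have hhalf : 1 - 2 * ((1 / 2 : ℝ≥0) : ℝ) ^ 2 = 1 / 2 := by norm_num
    rw [hhalf] at hyT
    exact Set.mem_biUnion hy (show b ≤ |⟪T ω y, y⟫| by linarith)
  have hp0 : 0 ≤ p := by
    obtain ⟨y, hy⟩ := exists_norm_eq E zero_le_one
    exact measureReal_nonneg.trans (hp y hy)
  calc P.real {ω | 2 * b < ‖T ω‖}
      ≤ P.real (⋃ y ∈ N, {ω | b ≤ |⟪T ω y, y⟫|}) := measureReal_mono hsub (measure_ne_top P _)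
    _ ≤ ∑ y ∈ N, P.real {ω | b ≤ |⟪T ω y, y⟫|} := measureReal_biUnion_finset_le _ _
    _ ≤ ∑ _y ∈ N, p := Finset.sum_le_sum fun y hy ↦ hp y (by simpa using hN hy)
    _ = N.card * p := by rw [Finset.sum_const, nsmul_eq_mul]
    _ ≤ 5 ^ finrank ℝ E * p := by
      gcongr
      exact_mod_cast hcard

end Net

section ChiSquare

lemma inv_sqrt_one_sub_le_exp {u : ℝ} (hu : |u| ≤ 1 / 2) :
    (√(1 - u))⁻¹ ≤ Real.exp (u / 2 + u ^ 2) := by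
  have hu' := abs_le.1 hu
  have hpos : 0 < 1 - u := by linarith
  have hlog : -Real.log (1 - u) ≤ u + 2 * u ^ 2 := by
    calc -Real.log (1 - u) = Real.log (1 - u)⁻¹ := (Real.log_inv _).symm
      _ ≤ (1 - u)⁻¹ - 1 := Real.log_le_sub_one_of_pos (by positivity)
      _ ≤ u + 2 * u ^ 2 := by
        rw [sub_le_iff_le_add, inv_le_iff_one_le_mul₀ hpos]
        nlinarith [sq_nonneg u]
  rw [Real.sqrt_eq_rpow, ← Real.rpow_neg hpos.le, Real.rpow_def_of_pos hpos]
  gcongr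
  linarith

lemma mgf_sq_gaussianReal {v : ℝ≥0} {l : ℝ} (hl : 2 * v * l < 1) :
    mgf (fun x ↦ x ^ 2) (gaussianReal 0 v) l = (√(1 - 2 * v * l))⁻¹ := by
  rcases eq_or_ne v 0 with rfl | hv
  · simp [mgf]
  have : (0 : ℝ) < v := by positivity
  have hfun (x : ℝ) : gaussianPDFReal 0 v x • Real.exp (l * x ^ 2) =
      (√(2 * Real.pi * v))⁻¹ * Real.exp (-((1 - 2 * v * l) / (2 * v)) * x ^ 2) := by
    simp only [gaussianPDFReal, sub_zero, smul_eq_mul, mul_assoc, ← Real.exp_add]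
    congr 2
    field
  rw [mgf, integral_gaussianReal_eq_integral_smul hv]
  simp_rw [hfun]
  rw [integral_const_mul, integral_gaussian, ← Real.sqrt_inv, ← Real.sqrt_inv,
    ← Real.sqrt_mul (by positivity)]
  congr 1
  field_simp

variable {Ω ι : Type*} {mΩ : MeasurableSpace Ω} {P : Measure Ω}

lemma mgf_sq_sub_one {X : Ω → ℝ} (hX : HasLaw X (gaussianReal 0 1) P) {l : ℝ} (hl : l < 1 / 2) :
    mgf (fun ω ↦ X ω ^ 2 - 1) P l = (√(1 - 2 * l))⁻¹ * Real.exp (-l) := by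
  have hsq : mgf (fun ω ↦ X ω ^ 2) P l = mgf (fun x ↦ x ^ 2) (gaussianReal 0 1) l :=
    hX.integral_comp (f := fun x ↦ Real.exp (l * x ^ 2)) (by fun_prop)
  have hl' : 2 * (1 : ℝ≥0) * l < 1 := by push_cast; linarith
  simp_rw [sub_eq_add_neg, mgf_add_const, hsq, mgf_sq_gaussianReal hl', NNReal.coe_one]
  ring_nf

lemma measure_abs_ge_le_two_mul_exp_mul [IsFiniteMeasure P] {X : Ω → ℝ} {s M : ℝ} (hs : 0 ≤ s)
    (hint : Integrable (fun ω ↦ Real.exp (s * X ω)) P)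
    (hint_neg : Integrable (fun ω ↦ Real.exp (-s * X ω)) P)
    (hmgf : mgf X P s ≤ M) (hmgf_neg : mgf X P (-s) ≤ M) (b : ℝ) :
    P.real {ω | b ≤ |X ω|} ≤ 2 * (Real.exp (-s * b) * M) := by
  have hunion : {ω | b ≤ |X ω|} = {ω | b ≤ X ω} ∪ {ω | X ω ≤ -b} := by
    ext ω
    exact (le_abs (a := b)).trans (or_congr_right le_neg)
  calc P.real {ω | b ≤ |X ω|}
      ≤ P.real {ω | b ≤ X ω} + P.real {ω | X ω ≤ -b} := hunion ▸ measureReal_union_le _ _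
    _ ≤ Real.exp (-s * b) * mgf X P s + Real.exp (- -s * -b) * mgf X P (-s) :=
      add_le_add (measure_ge_le_exp_mul_mgf b hs hint)
        (measure_le_le_exp_mul_mgf (-b) (neg_nonpos.2 hs) hint_neg)
    _ ≤ Real.exp (-s * b) * M + Real.exp (-s * b) * M := by
      rw [neg_mul_neg]
      gcongr
    _ = 2 * (Real.exp (-s * b) * M) := (two_mul _).symm

variable [Fintype ι] {X : ι → Ω → ℝ}

lemma mgf_sum_sq_sub_one (hX : ∀ j, HasLaw (X j) (gaussianReal 0 1) P) (hindep : iIndepFun X P)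
    {l : ℝ} (hl : l < 1 / 2) :
    mgf (fun ω ↦ ∑ j, (X j ω ^ 2 - 1)) P l =
      ((√(1 - 2 * l))⁻¹ * Real.exp (-l)) ^ Fintype.card ι := by
  have hindep' : iIndepFun (fun j ω ↦ X j ω ^ 2 - 1) P :=
    hindep.comp (fun _ x ↦ x ^ 2 - 1) (by fun_prop)
  have hmeas (j : ι) : AEMeasurable (fun ω ↦ X j ω ^ 2 - 1) P := by
    have := (hX j).aemeasurable
    fun_prop
  have hsum := hindep'.mgf_sum₀ (t := l) hmeas Finset.univ
  simpa [mgf_sq_sub_one (hX _) hl, Finset.sum_fn] using hsum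

lemma integrable_exp_mul_sum_sq_sub_one (hX : ∀ j, HasLaw (X j) (gaussianReal 0 1) P)
    (hindep : iIndepFun X P) {l : ℝ} (hl : l < 1 / 2) :
    Integrable (fun ω ↦ Real.exp (l * ∑ j, (X j ω ^ 2 - 1))) P := by
  refine .of_integral_ne_zero ?_
  rw [← mgf, mgf_sum_sq_sub_one hX hindep hl]
  have : 0 < 1 - 2 * l := by linarith
  positivity

lemma mgf_sum_sq_sub_one_le (hX : ∀ j, HasLaw (X j) (gaussianReal 0 1) P) (hindep : iIndepFun X P)
    {l : ℝ} (hl : |l| ≤ 1 / 4) :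
    mgf (fun ω ↦ ∑ j, (X j ω ^ 2 - 1)) P l ≤ Real.exp (4 * Fintype.card ι * l ^ 2) := by
  rw [mgf_sum_sq_sub_one hX hindep (by linarith [le_abs_self l])]
  calc ((√(1 - 2 * l))⁻¹ * Real.exp (-l)) ^ Fintype.card ι
      ≤ (Real.exp (2 * l / 2 + (2 * l) ^ 2) * Real.exp (-l)) ^ Fintype.card ι := by
        gcongr
        exact inv_sqrt_one_sub_le_exp (by rw [abs_mul, abs_two]; linarith)
    _ = Real.exp (4 * Fintype.card ι * l ^ 2) := by
        rw [← Real.exp_add, ← Real.exp_nat_mul]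
        ring_nf

lemma measure_abs_sum_sq_sub_one_ge_le (hX : ∀ j, HasLaw (X j) (gaussianReal 0 1) P)
    (hindep : iIndepFun X P) {t : ℝ} (ht : 0 ≤ t) (ht2 : t ≤ 2) :
    P.real {ω | Fintype.card ι * t ≤ |∑ j, (X j ω ^ 2 - 1)|} ≤
      2 * Real.exp (-(Fintype.card ι * t ^ 2 / 16)) := by
  have := hindep.isProbabilityMeasure
  -- `s = t / 8` minimises the exponent `-s t + 4 s²` of the Chernoff bound
  have hs : |t / 8| ≤ 1 / 4 := by rw [abs_of_nonneg (by positivity)]; linarith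
  have hmgf_neg := mgf_sum_sq_sub_one_le hX hindep ((abs_neg (t / 8)).trans_le hs)
  rw [neg_sq] at hmgf_neg
  refine (measure_abs_ge_le_two_mul_exp_mul (by positivity)
    (integrable_exp_mul_sum_sq_sub_one hX hindep (by linarith))
    (integrable_exp_mul_sum_sq_sub_one hX hindep (by linarith))
    (mgf_sum_sq_sub_one_le hX hindep hs) hmgf_neg _).trans_eq ?_
  rw [← Real.exp_add]
  ring_nf

end ChiSquare

lemma two_mul_five_pow_le_exp {d : ℕ} (hd : d ≠ 0) : 2 * 5 ^ d ≤ Real.exp (3 * d) := by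
  have h10 : (10 : ℝ) ≤ Real.exp 3 := by
    calc (10 : ℝ) ≤ 2.7 ^ 3 := by norm_num
      _ ≤ Real.exp 1 ^ 3 := by
        gcongr
        linarith [Real.exp_one_gt_d9]
      _ = Real.exp 3 := by rw [← Real.exp_nat_mul]; norm_num
  calc (2 * 5 ^ d : ℝ) ≤ 2 ^ d * 5 ^ d := by
        gcongr
        exact le_self_pow₀ one_le_two hd
    _ = 10 ^ d := by rw [← mul_pow]; norm_num
    _ ≤ Real.exp 3 ^ d := by gcongr
    _ = Real.exp (3 * d) := by rw [← Real.exp_nat_mul, mul_comm]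

section SampleCovariance

variable {E ι : Type*} [NormedAddCommGroup E] [InnerProductSpace ℝ E] [Fintype ι]

/-- The (uncentred) sample covariance operator `(1 / card ι) ∑ⱼ aⱼ aⱼᵀ` of a finite family of
vectors, the matrix `aⱼ aⱼᵀ` being encoded as the operator `x ↦ ⟪aⱼ, x⟫ aⱼ`. -/
noncomputable def sampleCovariance (a : ι → E) : E →L[ℝ] E :=
  (Fintype.card ι : ℝ)⁻¹ • ∑ j, rankOne ℝ (a j) (a j)

lemma isSymmetric_sampleCovariance (a : ι → E) : (sampleCovariance a).IsSymmetric := by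
  refine LinearMap.IsSymmetric.smul (conj_trivial _) ?_
  rw [ContinuousLinearMap.toLinearMap_sum]
  exact LinearMap.isSymmetric_sum _ fun j _ ↦ isSymmetric_rankOne_self (a j)

lemma card_mul_inner_sampleCovariance_sub_one [Nonempty ι] (a : ι → E) {y : E} (hy : ‖y‖ = 1) :
    Fintype.card ι * ⟪(sampleCovariance a - 1) y, y⟫ = ∑ j, (⟪y, a j⟫ ^ 2 - 1) := by
  have hcard : (Fintype.card ι : ℝ) ≠ 0 := by simp
  simp only [sampleCovariance, sub_apply, smul_apply, sum_apply, rankOne_apply,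
    one_apply_eq_self, inner_sub_left, inner_smul_left, sum_inner, conj_trivial,
    real_inner_self_eq_norm_sq, hy, Finset.sum_sub_distrib, Finset.sum_const, Finset.card_univ,
    nsmul_eq_mul]
  rw [mul_sub, mul_inv_cancel_left₀ hcard]
  simp [real_inner_comm, sq]

variable [FiniteDimensional ℝ E] [MeasurableSpace E] [BorelSpace E]
  {Ω : Type*} {mΩ : MeasurableSpace Ω} {P : Measure Ω}

lemma hasLaw_inner_of_hasLaw_stdGaussian {a : Ω → E} (ha : HasLaw a (stdGaussian E) P) {y : E}
    (hy : ‖y‖ = 1) : HasLaw (fun ω ↦ ⟪y, a ω⟫) (gaussianReal 0 1) P := by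
  have hmap : HasLaw (innerSL ℝ y) (gaussianReal 0 1) (stdGaussian E) := by
    refine ⟨by fun_prop, ?_⟩
    rw [IsGaussian.map_eq_gaussianReal, integral_strongDual_stdGaussian,
      variance_dual_stdGaussian, innerSL_apply_norm, hy, one_pow, Real.toNNReal_one]
  exact hmap.comp ha

variable {a : ι → Ω → E}

lemma measure_abs_inner_sampleCovariance_sub_one_ge_le [Nonempty ι]
    (ha : ∀ j, HasLaw (a j) (stdGaussian E) P) (hindep : iIndepFun a P) {y : E} (hy : ‖y‖ = 1)
    {t : ℝ} (ht : 0 ≤ t) (ht2 : t ≤ 2) :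
    P.real {ω | t ≤ |⟪(sampleCovariance (a · ω) - 1) y, y⟫|} ≤
      2 * Real.exp (-(Fintype.card ι * t ^ 2 / 16)) := by
  have hindep' : iIndepFun (fun j ω ↦ ⟪y, a j ω⟫) P :=
    hindep.comp (fun _ x ↦ ⟪y, x⟫) (by fun_prop)
  have htail := measure_abs_sum_sq_sub_one_ge_le
    (fun j ↦ hasLaw_inner_of_hasLaw_stdGaussian (ha j) hy) hindep' ht ht2
  have hcard : (0 : ℝ) < Fintype.card ι := by simp [Fintype.card_pos]
  simpa only [← card_mul_inner_sampleCovariance_sub_one (a · _) hy, abs_mul, Nat.abs_cast,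
    mul_le_mul_iff_right₀ hcard] using htail

theorem covariance_concentration_general (ha : ∀ j, HasLaw (a j) (stdGaussian E) P)
    (hindep : iIndepFun a P) {ε : ℝ} (hε : 0 < ε) (hε4 : ε ≤ 4)
    (hcard : 384 * ε⁻¹ ^ 2 * finrank ℝ E ≤ Fintype.card ι) :
    P.real {ω | ε < ‖sampleCovariance (a · ω) - 1‖} ≤
      Real.exp (-(1 / 128 * Fintype.card ι * ε ^ 2)) := by
  have := hindep.isProbabilityMeasure
  rcases subsingleton_or_nontrivial E with hE | hE
  · have hnorm (ω : Ω) : ‖sampleCovariance (a · ω) - 1‖ = 0 := by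
      rw [Subsingleton.elim (sampleCovariance (a · ω) - 1) 0, norm_zero]
    simp [hnorm, hε.not_gt, Real.exp_nonneg]
  have hd : finrank ℝ E ≠ 0 := finrank_pos.ne'
  have : Nonempty ι := by
    have : 0 < 384 * ε⁻¹ ^ 2 * finrank ℝ E := by positivity
    exact Fintype.card_pos_iff.1 (mod_cast this.trans_le hcard)
  have hexponent : 3 * finrank ℝ E ≤ Fintype.card ι * ε ^ 2 / 128 := by
    have := mul_le_mul_of_nonneg_right hcard (sq_nonneg ε)
    field_simp at this
    linarith
  calc P.real {ω | ε < ‖sampleCovariance (a · ω) - 1‖}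
      = P.real {ω | 2 * (ε / 2) < ‖sampleCovariance (a · ω) - 1‖} := by
        rw [mul_div_cancel₀ ε two_ne_zero]
    _ ≤ 5 ^ finrank ℝ E * (2 * Real.exp (-(Fintype.card ι * (ε / 2) ^ 2 / 16))) :=
      measure_opNorm_gt_two_mul_le (fun ω ↦ (isSymmetric_sampleCovariance (a · ω)).sub .one)
        fun _ hy ↦ measure_abs_inner_sampleCovariance_sub_one_ge_le ha hindep hy
          (by linarith) (by linarith)
    _ = 2 * 5 ^ finrank ℝ E * Real.exp (-(Fintype.card ι * ε ^ 2 / 64)) := by ring_nf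
    _ ≤ Real.exp (Fintype.card ι * ε ^ 2 / 128) * Real.exp (-(Fintype.card ι * ε ^ 2 / 64)) := by
      gcongr
      exact (two_mul_five_pow_le_exp hd).trans (Real.exp_le_exp.2 hexponent)
    _ = Real.exp (-(1 / 128 * Fintype.card ι * ε ^ 2)) := by
      rw [← Real.exp_add]
      ring_nf

end SampleCovariance

section Matrix

lemma toContinuousLinearMap_toEuclideanLin_sub_one {m n : ℕ} (a : Fin m → Fin n → ℝ) :
    LinearMap.toContinuousLinearMap (Matrix.toEuclideanLin
      ((Matrix.of fun k l : Fin n => (1 / (m : ℝ)) * ∑ j, a j k * a j l) - 1)) =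
      sampleCovariance (fun j ↦ WithLp.toLp 2 (a j)) - 1 := by
  ext x k
  have hswap : ∑ l, ((m : ℝ)⁻¹ * ∑ j, a j k * a j l) * x l =
      (m : ℝ)⁻¹ * ∑ j, (∑ l, x l * a j l) * a j k := by
    simp only [Finset.mul_sum, Finset.sum_mul]
    rw [Finset.sum_comm]
    exact Finset.sum_congr rfl fun j _ ↦ Finset.sum_congr rfl fun l _ ↦ by ring
  simpa [sampleCovariance, Matrix.mulVec, dotProduct, PiLp.inner_apply] using hswap

lemma hasLaw_toLp_stdGaussianMat {m n : ℕ} (j : Fin m) :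
    HasLaw (fun a ↦ WithLp.toLp 2 (a j)) (stdGaussian (EuclideanSpace ℝ (Fin n)))
      (stdGaussianMat m n) :=
  HasLaw.comp ⟨by fun_prop, map_pi_eq_stdGaussian⟩
    (measurePreserving_eval (fun _ ↦ Measure.pi fun _ ↦ gaussianReal 0 1) j).hasLaw

lemma iIndepFun_toLp_stdGaussianMat (m n : ℕ) :
    iIndepFun (fun (j : Fin m) (a : Fin m → Fin n → ℝ) ↦ WithLp.toLp 2 (a j))
      (stdGaussianMat m n) :=
  iIndepFun_pi fun _ ↦ by fun_prop

end Matrix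

/-- For i.i.d. standard Gaussian vectors `aⱼ` and `A = (1/m) ∑ⱼ aⱼaⱼᵀ`:
if `0 < ε ≤ 1` and `m ≥ C ε⁻² n` then `P(‖A − I‖_op > ε) ≤ exp(−c m ε²)`. -/
theorem covariance_concentration :
    ∃ C > (0 : ℝ), ∃ c > (0 : ℝ), ∀ (n m : ℕ) (ε : ℝ), 0 < ε → ε ≤ 1 →
      (m : ℝ) ≥ C * ε⁻¹ ^ 2 * n →
      (stdGaussianMat m n {a | ε <
          ‖LinearMap.toContinuousLinearMap (Matrix.toEuclideanLin
            ((Matrix.of fun k l : Fin n => (1 / (m : ℝ)) * ∑ j, a j k * a j l) - 1))‖}).toReal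
        ≤ Real.exp (-(c * m * ε ^ 2)) := by
  refine ⟨384, by norm_num, 1 / 128, by norm_num, fun n m ε hε hε1 hm ↦ ?_⟩
  simp_rw [← measureReal_def, toContinuousLinearMap_toEuclideanLin_sub_one]
  simpa using covariance_concentration_general hasLaw_toLp_stdGaussianMat
    (iIndepFun_toLp_stdGaussianMat m n) hε (by linarith) (by simpa using hm)
end

section
/- For 0 < ε ≤ 1/2 there exists N₀(ε) = C√(log(1/ε)) such that for N ≥ N₀ and m ≥ C ε⁻² log(1/ε) n, with probability at least 1 − exp(−c ε² m), (1/m) Σ_{j=1}^m 1{|a_j^T u| > N} ≤ ε for every unit vector u ∈ R^n. -/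
open MeasureTheory ProbabilityTheory
open scoped Classical

/-!
Suppose that more than `ε m` of the vectors `aⱼ` satisfy `|⟪aⱼ, u⟫| > N` for some unit vector `u`.
Putting `σⱼ = sign ⟪aⱼ, u⟫` on those indices, `0` elsewhere, and `k = ∑ⱼ σⱼ²`, the Cauchy–Schwarz
inequality gives `‖∑ⱼ σⱼ aⱼ‖ ≥ k N`. This no longer involves `u`, so a union bound over the sign
patterns `σ` replaces the usual net argument. For a fixed `σ` the vector `∑ⱼ σⱼ aⱼ` is sub-Gaussian
with variance proxy `k`, so the event has probability at most `√2 ^ n * exp (-k N² / 4)`, and for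
`N² ≥ 36 log (1/ε)` this outweighs the entropy of the sign patterns.
-/

section

open Module
open scoped Finset NNReal RealInnerProductSpace

variable {ι : Type*} [Fintype ι]

lemma lintegral_prod_pi {α : ι → Type*} [∀ i, MeasurableSpace (α i)] {μ : ∀ i, Measure (α i)}
    [∀ i, IsProbabilityMeasure (μ i)] {f : ∀ i, α i → ENNReal} (hf : ∀ i, Measurable (f i)) :
    ∫⁻ x, ∏ i, f i (x i) ∂(Measure.pi μ) = ∏ i, ∫⁻ x, f i x ∂(μ i) := by
  rw [lintegral_prod_eq_prod_lintegral_of_indepFun Finset.univ (fun i (x : ∀ i, α i) => f i (x i))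
    (iIndepFun_pi fun i => (hf i).aemeasurable) fun i => (hf i).comp (measurable_pi_apply i)]
  exact Finset.prod_congr rfl fun i _ => (measurePreserving_eval μ i).lintegral_comp (hf i)

lemma hasSubgaussianMGF_id_gaussianReal (v : ℝ≥0) : HasSubgaussianMGF id v (gaussianReal 0 v) where
  integrable_exp_mul t := integrable_exp_mul_gaussianReal t
  mgf_le t := by simp [mgf_id_gaussianReal]

lemma lintegral_exp_gaussianReal (v : ℝ≥0) :
    ∫⁻ x, ENNReal.ofReal (Real.exp x) ∂(gaussianReal 0 v) =
      ENNReal.ofReal (Real.exp (v / 2)) := by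
  have hint : Integrable Real.exp (gaussianReal 0 v) := by
    simpa using integrable_exp_mul_gaussianReal (μ := 0) (v := v) 1
  rw [← ofReal_integral_eq_lintegral_ofReal hint (.of_forall fun x => (Real.exp_pos x).le)]
  simpa [mgf] using congrArg ENNReal.ofReal (congrFun (mgf_fun_id_gaussianReal (μ := 0) (v := v)) 1)

-- The integrand times the standard Gaussian density is `(√(1 - s))⁻¹` times the Gaussian density
-- of variance `(1 - s)⁻¹`.
lemma lintegral_exp_mul_sq_div_two_gaussianReal {s : ℝ} (hs : s < 1) :
    ∫⁻ x, ENNReal.ofReal (Real.exp (s * x ^ 2 / 2)) ∂(gaussianReal 0 1) =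
      ENNReal.ofReal (√(1 - s))⁻¹ := by
  have hs' : 0 < 1 - s := sub_pos.mpr hs
  let v : ℝ≥0 := ⟨(1 - s)⁻¹, by positivity⟩
  have hv : v ≠ 0 := fun h => (inv_pos.mpr hs').ne' (congrArg NNReal.toReal h)
  have reweight (x : ℝ) : gaussianPDF 0 1 x * ENNReal.ofReal (Real.exp (s * x ^ 2 / 2)) =
      ENNReal.ofReal (√(1 - s))⁻¹ * gaussianPDF 0 v x := by
    have hvs : (v : ℝ) = (1 - s)⁻¹ := rfl
    simp only [gaussianPDF, gaussianPDFReal, hvs, NNReal.coe_one]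
    rw [← ENNReal.ofReal_mul (by positivity), ← ENNReal.ofReal_mul (by positivity), mul_assoc,
      ← Real.exp_add, ← mul_assoc, ← mul_inv, ← Real.sqrt_mul hs'.le]
    congr 3
    · field_simp
    · field_simp
      ring
  rw [gaussianReal_of_var_ne_zero 0 one_ne_zero,
    lintegral_withDensity_eq_lintegral_mul _ (measurable_gaussianPDF 0 1) (by fun_prop)]
  simp_rw [Pi.mul_apply, reweight]
  rw [lintegral_const_mul _ (measurable_gaussianPDF 0 v), lintegral_gaussianPDF_eq_one 0 hv,
    mul_one]

lemma sum_signType_exp_neg_mul_sum_sq (L : ℝ) :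
    ∑ σ : ι → SignType, Real.exp (-(L * ∑ j, (σ j : ℝ) ^ 2)) =
      (1 + 2 * Real.exp (-L)) ^ Fintype.card ι := by
  have hsingle : ∑ s : SignType, Real.exp (-(L * (s : ℝ) ^ 2)) = 1 + 2 * Real.exp (-L) := by
    have huniv : (Finset.univ : Finset SignType) = {0, -1, 1} := rfl
    rw [huniv, Finset.sum_insert (by decide), Finset.sum_pair (by decide)]
    norm_num [two_mul]
  rw [← hsingle, ← Finset.card_univ, ← Finset.prod_const, Finset.prod_univ_sum,
    Fintype.piFinset_univ]
  simp_rw [← Real.exp_sum, Finset.mul_sum, Finset.sum_neg_distrib]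

variable {E : Type*} [NormedAddCommGroup E] [InnerProductSpace ℝ E]

lemma exists_sign_sum_sq_mul_le_norm_sum_smul (x : ι → E) {u : E} (hu : ‖u‖ ≤ 1) {N : ℝ}
    (hN : 0 ≤ N) :
    ∃ σ : ι → SignType, ∑ j, (σ j : ℝ) ^ 2 = #{j | N < |⟪x j, u⟫|} ∧
      (∑ j, (σ j : ℝ) ^ 2) * N ≤ ‖∑ j, (σ j : ℝ) • x j‖ := by
  let σ (j : ι) : SignType := if N < |⟪x j, u⟫| then SignType.sign ⟪x j, u⟫ else 0
  have hsq (j : ι) : (σ j : ℝ) ^ 2 = if N < |⟪x j, u⟫| then 1 else 0 := by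
    by_cases hj : N < |⟪x j, u⟫|
    · rcases (abs_pos.mp (hN.trans_lt hj)).lt_or_gt with h | h <;> simp [σ, hj, h]
    · simp [σ, hj]
  have hterm (j : ι) : (σ j : ℝ) ^ 2 * N ≤ σ j * ⟪x j, u⟫ := by
    rw [hsq]
    by_cases hj : N < |⟪x j, u⟫|
    · simp [σ, hj, hj.le]
    · simp [σ, hj]
  refine ⟨σ, by simp_rw [hsq, Finset.sum_boole], ?_⟩
  calc (∑ j, (σ j : ℝ) ^ 2) * N ≤ ∑ j, σ j * ⟪x j, u⟫ := by
        rw [Finset.sum_mul]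
        exact Finset.sum_le_sum fun j _ => hterm j
    _ = ⟪∑ j, (σ j : ℝ) • x j, u⟫ := by simp_rw [sum_inner, real_inner_smul_left]
    _ ≤ ‖∑ j, (σ j : ℝ) • x j‖ * ‖u‖ := real_inner_le_norm _ _
    _ ≤ ‖∑ j, (σ j : ℝ) • x j‖ := mul_le_of_le_one_right (norm_nonneg _) hu

variable {Ω : Type*} [MeasurableSpace Ω] {μ : Measure Ω}

/-- A random vector `X` is sub-Gaussian with variance proxy `c` if each linear functional `⟪X, u⟫`
is a sub-Gaussian random variable with variance proxy `c ‖u‖²`; no separate measurability of `X` is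
imposed, see `IsSubgaussianVector.aemeasurable`. -/
def IsSubgaussianVector (X : Ω → E) (c : ℝ≥0) (μ : Measure Ω) : Prop :=
  ∀ u : E, HasSubgaussianMGF (fun ω => ⟪X ω, u⟫) (c * ‖u‖₊ ^ 2) μ

namespace IsSubgaussianVector

lemma lintegral_exp_inner_le {X : Ω → E} {c : ℝ≥0} (hX : IsSubgaussianVector X c μ) (u : E) :
    ∫⁻ ω, ENNReal.ofReal (Real.exp ⟪X ω, u⟫) ∂μ ≤
      ENNReal.ofReal (Real.exp (c * ‖u‖ ^ 2 / 2)) := by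
  have hint : Integrable (fun ω => Real.exp ⟪X ω, u⟫) μ := by
    simpa using (hX u).integrable_exp_mul 1
  rw [← ofReal_integral_eq_lintegral_ofReal hint (.of_forall fun _ => (Real.exp_pos _).le)]
  exact ENNReal.ofReal_le_ofReal (by simpa [mgf] using (hX u).mgf_le 1)

lemma sum_smul_of_iIndepFun [MeasurableSpace E] [OpensMeasurableSpace E]
    {X : ι → Ω → E} (hindep : iIndepFun X μ) {c : ι → ℝ≥0}
    (hX : ∀ j, IsSubgaussianVector (X j) (c j) μ) (s : ι → ℝ) :
    IsSubgaussianVector (fun ω => ∑ j, s j • X j ω) (∑ j, ‖s j‖₊ ^ 2 * c j) μ := by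
  intro u
  have hindep' : iIndepFun (fun j ω => s j * ⟪X j ω, u⟫) μ :=
    hindep.comp (fun j x => s j * ⟪x, u⟫) fun _ => Continuous.measurable (by fun_prop)
  have h := HasSubgaussianMGF.sum_of_iIndepFun hindep' (s := Finset.univ)
    fun j _ => (hX j u).const_mul (s j)
  simp_rw [sum_inner, real_inner_smul_left]
  convert h
  rw [Finset.sum_mul]
  refine Finset.sum_congr rfl fun j _ => NNReal.eq ?_
  simp only [NNReal.coe_mul, NNReal.coe_pow, coe_nnnorm, Real.norm_eq_abs, sq_abs, mul_assoc]
  rfl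

end IsSubgaussianVector

variable [FiniteDimensional ℝ E] [MeasurableSpace E] [BorelSpace E]

lemma map_inner_stdGaussian (x : E) :
    (stdGaussian E).map (fun g => ⟪x, g⟫) = gaussianReal 0 (‖x‖₊ ^ 2) := by
  have h := IsGaussian.map_eq_gaussianReal (μ := stdGaussian E) (innerSL ℝ x)
  rwa [integral_strongDual_stdGaussian, variance_dual_stdGaussian, innerSL_apply_norm,
    Real.toNNReal_pow (norm_nonneg x), norm_toNNReal] at h

lemma lintegral_exp_inner_stdGaussian (x : E) :
    ∫⁻ g, ENNReal.ofReal (Real.exp ⟪x, g⟫) ∂(stdGaussian E) =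
      ENNReal.ofReal (Real.exp (‖x‖ ^ 2 / 2)) := by
  rw [← lintegral_map (f := fun y => ENNReal.ofReal (Real.exp y)) (by fun_prop) (by fun_prop),
    map_inner_stdGaussian, lintegral_exp_gaussianReal]
  simp

lemma lintegral_exp_mul_norm_sq_div_two_stdGaussian {s : ℝ} (hs : s < 1) :
    ∫⁻ g, ENNReal.ofReal (Real.exp (s * ‖g‖ ^ 2 / 2)) ∂(stdGaussian E) =
      ENNReal.ofReal ((√(1 - s))⁻¹ ^ finrank ℝ E) := by
  let b := stdOrthonormalBasis ℝ E
  have factor (x : Fin (finrank ℝ E) → ℝ) :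
      ENNReal.ofReal (Real.exp (s * ‖∑ i, x i • b i‖ ^ 2 / 2)) =
        ∏ i, ENNReal.ofReal (Real.exp (s * x i ^ 2 / 2)) := by
    rw [← ENNReal.ofReal_prod_of_nonneg fun _ _ => (Real.exp_pos _).le, ← Real.exp_sum,
      ← b.sum_sq_norm_inner_right, Finset.mul_sum, Finset.sum_div]
    simp [b.orthonormal.inner_right_fintype]
  rw [stdGaussian_eq_map_pi_orthonormalBasis b, lintegral_map (by fun_prop) (by fun_prop)]
  simp_rw [factor]
  rw [lintegral_prod_pi (f := fun _ x => ENNReal.ofReal (Real.exp (s * x ^ 2 / 2)))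
    fun _ => by fun_prop]
  rw [Finset.prod_const, lintegral_exp_mul_sq_div_two_gaussianReal hs, Finset.card_univ,
    Fintype.card_fin, ENNReal.ofReal_pow (by positivity)]

namespace IsSubgaussianVector

lemma of_hasLaw_stdGaussian {X : Ω → E} (hX : HasLaw X (stdGaussian E) μ) :
    IsSubgaussianVector X 1 μ := by
  intro u
  have hu : HasLaw (fun ω => ⟪X ω, u⟫) (gaussianReal 0 (‖u‖₊ ^ 2)) μ := by
    have := HasLaw.comp ⟨by fun_prop, map_inner_stdGaussian u⟩ hX
    simpa only [Function.comp_def, real_inner_comm] using this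
  rw [one_mul, ← HasSubgaussianMGF.id_map_iff hu.aemeasurable, hu.map_eq]
  exact hasSubgaussianMGF_id_gaussianReal _

variable {X : Ω → E} {c : ℝ≥0}

protected lemma aemeasurable (hX : IsSubgaussianVector X c μ) : AEMeasurable X μ := by
  let b := stdOrthonormalBasis ℝ E
  have hcoord : X = fun ω => ∑ i, ⟪X ω, b i⟫ • b i := by
    funext ω
    simpa only [real_inner_comm] using (b.sum_repr' (X ω)).symm
  rw [hcoord]
  exact Finset.aemeasurable_fun_sum _ fun i _ => (hX (b i)).aemeasurable.smul_const _

-- Writing `exp (s ‖x‖² / 2)` as the average of `exp ⟪x, √s g⟫` over a Gaussian vector `g`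
-- linearizes the exponent, so that the bound on the exponential moments of `⟪X, √s g⟫` applies.
lemma lintegral_exp_mul_norm_sq_div_two_le [SFinite μ] (hX : IsSubgaussianVector X c μ) {s : ℝ}
    (hs : 0 ≤ s) (hcs : c * s < 1) :
    ∫⁻ ω, ENNReal.ofReal (Real.exp (s * ‖X ω‖ ^ 2 / 2)) ∂μ ≤
      ENNReal.ofReal ((√(1 - c * s))⁻¹ ^ finrank ℝ E) := by
  have linearize (x : E) : ENNReal.ofReal (Real.exp (s * ‖x‖ ^ 2 / 2)) =
      ∫⁻ g, ENNReal.ofReal (Real.exp ⟪x, √s • g⟫) ∂(stdGaussian E) := by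
    simp_rw [real_inner_smul_right, ← real_inner_smul_left]
    rw [lintegral_exp_inner_stdGaussian, norm_smul, mul_pow, Real.norm_eq_abs, sq_abs,
      Real.sq_sqrt hs]
  have hmeas : AEMeasurable (fun p : Ω × E => ENNReal.ofReal (Real.exp ⟪X p.1, √s • p.2⟫))
      (μ.prod (stdGaussian E)) := by
    have hinner : AEMeasurable (fun p : Ω × E => ⟪X p.1, √s • p.2⟫) (μ.prod (stdGaussian E)) :=
      hX.aemeasurable.comp_fst.inner (by fun_prop)
    fun_prop
  calc ∫⁻ ω, ENNReal.ofReal (Real.exp (s * ‖X ω‖ ^ 2 / 2)) ∂μ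
      = ∫⁻ ω, ∫⁻ g, ENNReal.ofReal (Real.exp ⟪X ω, √s • g⟫) ∂(stdGaussian E) ∂μ := by
        simp_rw [linearize]
    _ = ∫⁻ g, ∫⁻ ω, ENNReal.ofReal (Real.exp ⟪X ω, √s • g⟫) ∂μ ∂(stdGaussian E) :=
        lintegral_lintegral_swap hmeas
    _ ≤ ∫⁻ g, ENNReal.ofReal (Real.exp (c * s * ‖g‖ ^ 2 / 2)) ∂(stdGaussian E) := by
        refine lintegral_mono fun g => (hX.lintegral_exp_inner_le _).trans_eq ?_
        rw [norm_smul, mul_pow, Real.norm_eq_abs, sq_abs, Real.sq_sqrt hs, mul_assoc (c : ℝ)]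
    _ = ENNReal.ofReal ((√(1 - c * s))⁻¹ ^ finrank ℝ E) :=
        lintegral_exp_mul_norm_sq_div_two_stdGaussian hcs

lemma measure_norm_ge_le [SFinite μ] (hX : IsSubgaussianVector X c μ) (hc : 0 < c) {r : ℝ}
    (hr : 0 ≤ r) :
    μ {ω | r ≤ ‖X ω‖} ≤
      ENNReal.ofReal (√2 ^ finrank ℝ E * Real.exp (-(r ^ 2 / (4 * c)))) := by
  let s : ℝ := 1 / (2 * c)
  have hs : 0 ≤ s := by positivity
  have hcs : c * s = 1 / 2 := by
    simp only [s]
    field_simp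
  have hmoment : ∫⁻ ω, ENNReal.ofReal (Real.exp (s * ‖X ω‖ ^ 2 / 2)) ∂μ ≤
      ENNReal.ofReal (√2 ^ finrank ℝ E) := by
    convert hX.lintegral_exp_mul_norm_sq_div_two_le hs (by linarith) using 3
    rw [hcs, ← Real.sqrt_inv]
    norm_num
  have hmeas : AEMeasurable (fun ω => ENNReal.ofReal (Real.exp (s * ‖X ω‖ ^ 2 / 2))) μ := by
    have := hX.aemeasurable
    fun_prop
  calc μ {ω | r ≤ ‖X ω‖}
      ≤ μ {ω | ENNReal.ofReal (Real.exp (s * r ^ 2 / 2)) ≤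
          ENNReal.ofReal (Real.exp (s * ‖X ω‖ ^ 2 / 2))} := by
        refine measure_mono fun ω (hω : r ≤ ‖X ω‖) => ENNReal.ofReal_le_ofReal ?_
        gcongr
    _ ≤ (∫⁻ ω, ENNReal.ofReal (Real.exp (s * ‖X ω‖ ^ 2 / 2)) ∂μ) /
          ENNReal.ofReal (Real.exp (s * r ^ 2 / 2)) :=
        meas_ge_le_lintegral_div hmeas (by simp [Real.exp_pos]) ENNReal.ofReal_ne_top
    _ ≤ ENNReal.ofReal (√2 ^ finrank ℝ E) / ENNReal.ofReal (Real.exp (s * r ^ 2 / 2)) := by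
        gcongr
    _ = ENNReal.ofReal (√2 ^ finrank ℝ E * Real.exp (-(r ^ 2 / (4 * c)))) := by
        rw [← ENNReal.ofReal_div_of_pos (Real.exp_pos _), Real.exp_neg, ← div_eq_mul_inv]
        congr 3
        simp only [s]
        ring

end IsSubgaussianVector

variable {X : ι → Ω → E} {c : ℝ≥0}

lemma measure_norm_sum_sign_smul_ge_le [SFinite μ] (hindep : iIndepFun X μ)
    (hX : ∀ j, IsSubgaussianVector (X j) c μ) (hc : 0 < c) {N : ℝ} (hN : 0 ≤ N)
    {σ : ι → SignType} (hσ : 0 < ∑ j, (σ j : ℝ) ^ 2) :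
    μ {ω | (∑ j, (σ j : ℝ) ^ 2) * N ≤ ‖∑ j, (σ j : ℝ) • X j ω‖} ≤
      ENNReal.ofReal (√2 ^ finrank ℝ E *
        Real.exp (-(N ^ 2 / (4 * c) * ∑ j, (σ j : ℝ) ^ 2))) := by
  have hproxy : ((∑ j, ‖(σ j : ℝ)‖₊ ^ 2 * c : ℝ≥0) : ℝ) = (∑ j, (σ j : ℝ) ^ 2) * c := by
    simp [Finset.sum_mul]
  have hS := IsSubgaussianVector.sum_smul_of_iIndepFun hindep hX fun j => (σ j : ℝ)
  have hpos : 0 < ∑ j, ‖(σ j : ℝ)‖₊ ^ 2 * c := by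
    rw [← NNReal.coe_pos, hproxy]
    positivity
  convert hS.measure_norm_ge_le hpos (mul_nonneg hσ.le hN) using 5
  rw [hproxy]
  field_simp

-- The part `L` of the exponent `N ^ 2 / (4 * c)` is spent on the union bound over sign patterns,
-- the rest on the threshold `δ`.
lemma measure_exists_card_lt_abs_inner_gt_le [SFinite μ] (hindep : iIndepFun X μ)
    (hX : ∀ j, IsSubgaussianVector (X j) c μ) (hc : 0 < c) {N δ L : ℝ} (hN : 0 ≤ N) (hδ : 0 ≤ δ)
    (hL : L ≤ N ^ 2 / (4 * c)) :
    μ {ω | ∃ u : E, ‖u‖ ≤ 1 ∧ δ < #{j | N < |⟪X j ω, u⟫|}} ≤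
      ENNReal.ofReal (√2 ^ finrank ℝ E * Real.exp (-((N ^ 2 / (4 * c) - L) * δ)) *
        (1 + 2 * Real.exp (-L)) ^ Fintype.card ι) := by
  let k (σ : ι → SignType) : ℝ := ∑ j, (σ j : ℝ) ^ 2
  let T := Finset.univ.filter fun σ : ι → SignType => δ < k σ
  have hcover : {ω | ∃ u : E, ‖u‖ ≤ 1 ∧ δ < #{j | N < |⟪X j ω, u⟫|}} ⊆
      ⋃ σ ∈ T, {ω | k σ * N ≤ ‖∑ j, (σ j : ℝ) • X j ω‖} := by
    rintro ω ⟨u, hu, hcard⟩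
    obtain ⟨σ, hσcard, hσnorm⟩ := exists_sign_sum_sq_mul_le_norm_sum_smul (X · ω) hu hN
    exact Set.mem_biUnion (by simpa [T, k, hσcard] using hcard) hσnorm
  have htail (σ : ι → SignType) (hσ : δ < k σ) : μ {ω | k σ * N ≤ ‖∑ j, (σ j : ℝ) • X j ω‖} ≤
      ENNReal.ofReal (√2 ^ finrank ℝ E * Real.exp (-((N ^ 2 / (4 * c) - L) * δ)) *
        Real.exp (-(L * k σ))) := by
    refine (measure_norm_sum_sign_smul_ge_le hindep hX hc hN (hδ.trans_lt hσ)).trans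
      (ENNReal.ofReal_le_ofReal ?_)
    rw [mul_assoc, ← Real.exp_add]
    gcongr
    linarith [mul_le_mul_of_nonneg_left hσ.le (sub_nonneg.mpr hL)]
  refine (measure_mono hcover).trans <| (measure_biUnion_finset_le _ _).trans <|
    (Finset.sum_le_sum fun σ hσ => htail σ (Finset.mem_filter.mp hσ).2).trans ?_
  rw [← ENNReal.ofReal_sum_of_nonneg fun _ _ => by positivity, ← Finset.mul_sum,
    ← sum_signType_exp_neg_mul_sum_sq]
  gcongr
  exact Finset.subset_univ T

lemma half_le_log_one_div {ε : ℝ} (hε : 0 < ε) (hε' : ε ≤ 1 / 2) : 1 / 2 ≤ Real.log (1 / ε) := by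
  have : Real.log 2 ≤ Real.log (1 / ε) :=
    Real.log_le_log two_pos (by rw [le_div_iff₀ hε]; linarith)
  linarith [Real.log_two_gt_d9]

lemma sqrt_two_pow_mul_exp_mul_pow_le_exp {ε A : ℝ} {n m : ℕ} (hε : 0 < ε) (hε' : ε ≤ 1 / 2)
    (hA : 9 * Real.log (1 / ε) ≤ A) (hn : n ≤ ε * Real.log (1 / ε) * m) :
    √2 ^ n * Real.exp (-((A - Real.log (1 / ε)) * (ε * m))) *
        (1 + 2 * Real.exp (-Real.log (1 / ε))) ^ m ≤
      Real.exp (-(ε * Real.log (1 / ε) * m)) := by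
  set L := Real.log (1 / ε) with hL
  have hexpL : Real.exp (-L) = ε := by
    rw [hL, one_div, Real.log_inv, neg_neg, Real.exp_log hε]
  have hsqrt : √2 ^ n ≤ Real.exp n := by
    rw [← mul_one (n : ℝ), Real.exp_nat_mul]
    gcongr
    have : √2 ≤ 2 := Real.sqrt_le_iff.mpr (by norm_num)
    linarith [Real.add_one_le_exp 1]
  have hentropy : (1 + 2 * Real.exp (-L)) ^ m ≤ Real.exp (m * (2 * ε)) := by
    rw [hexpL, Real.exp_nat_mul]
    gcongr
    linarith [Real.add_one_le_exp (2 * ε)]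
  have hεm : 0 ≤ ε * m := by positivity
  calc √2 ^ n * Real.exp (-((A - L) * (ε * m))) * (1 + 2 * Real.exp (-L)) ^ m
      ≤ Real.exp n * Real.exp (-((A - L) * (ε * m))) * Real.exp (m * (2 * ε)) := by gcongr
    _ = Real.exp (n + -((A - L) * (ε * m)) + m * (2 * ε)) := by rw [Real.exp_add, Real.exp_add]
    _ ≤ Real.exp (-(ε * L * m)) := by
        gcongr
        linarith [mul_le_mul_of_nonneg_right hA hεm,
          mul_le_mul_of_nonneg_right (half_le_log_one_div hε hε') hεm]

theorem uniform_truncation_bound_general [IsProbabilityMeasure μ] (hindep : iIndepFun X μ)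
    (hX : ∀ j, IsSubgaussianVector (X j) c μ) (hc : 0 < c) {ε N : ℝ} (hε : 0 < ε)
    (hε' : ε ≤ 1 / 2) (hN : 6 * √(c * Real.log (1 / ε)) ≤ N)
    (hdim : finrank ℝ E ≤ ε * Real.log (1 / ε) * Fintype.card ι) :
    ENNReal.ofReal (1 - Real.exp (-(ε * Real.log (1 / ε) * Fintype.card ι))) ≤
      μ {ω | ∀ u : E, ‖u‖ ≤ 1 → #{j | N < |⟪X j ω, u⟫|} ≤
        ε * Fintype.card ι} := by
  have hL : 0 < Real.log (1 / ε) := by linarith [half_le_log_one_div hε hε']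
  have hexponent : 9 * Real.log (1 / ε) ≤ N ^ 2 / (4 * c) := by
    rw [le_div_iff₀ (by positivity)]
    have := pow_le_pow_left₀ (by positivity) hN 2
    rw [mul_pow, Real.sq_sqrt (by positivity)] at this
    linarith
  rw [ENNReal.ofReal_sub _ (Real.exp_pos _).le, ENNReal.ofReal_one, tsub_le_iff_right,
    ← measure_univ (μ := μ)]
  refine (measure_univ_le_add_compl _).trans (add_le_add_right ?_ _)
  simp only [Set.compl_ofPred, not_forall, not_le, exists_prop]
  exact (measure_exists_card_lt_abs_inner_gt_le hindep hX hc (le_trans (by positivity) hN)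
    (by positivity) (by linarith)).trans
      (ENNReal.ofReal_le_ofReal (sqrt_two_pow_mul_exp_mul_pow_le_exp hε hε' hexponent hdim))

instance isProbabilityMeasure_stdGaussianMat (m n : ℕ) :
    IsProbabilityMeasure (stdGaussianMat m n) :=
  inferInstanceAs (IsProbabilityMeasure (Measure.pi _))

lemma iIndepFun_row_stdGaussianMat (m n : ℕ) :
    iIndepFun (fun (j : Fin m) a => (WithLp.toLp 2 (a j) : EuclideanSpace ℝ (Fin n)))
      (stdGaussianMat m n) :=
  iIndepFun_pi (X := fun _ => WithLp.toLp 2) fun _ => by fun_prop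

lemma hasLaw_row_stdGaussianMat {m n : ℕ} (j : Fin m) :
    HasLaw (fun a => WithLp.toLp 2 (a j)) (stdGaussian (EuclideanSpace ℝ (Fin n)))
      (stdGaussianMat m n) :=
  HasLaw.comp ⟨by fun_prop, map_pi_eq_stdGaussian⟩
    (measurePreserving_eval (fun _ => Measure.pi fun _ => gaussianReal 0 1) j).hasLaw

lemma one_sub_exp_le_stdGaussianMat_truncation {ε N : ℝ} {m n : ℕ} (hε : 0 < ε) (hε' : ε ≤ 1 / 2)
    (hN : 6 * √(Real.log (1 / ε)) ≤ N) (hdim : n ≤ ε * Real.log (1 / ε) * m) :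
    ENNReal.ofReal (1 - Real.exp (-(ε * Real.log (1 / ε) * m))) ≤
      stdGaussianMat m n {a | ∀ u : Fin n → ℝ, ∑ i, u i ^ 2 = 1 →
        1 / m * ∑ j, (if N < |∑ i, a j i * u i| then (1 : ℝ) else 0) ≤ ε} := by
  have h := uniform_truncation_bound_general (iIndepFun_row_stdGaussianMat m n)
    (fun j => .of_hasLaw_stdGaussian (hasLaw_row_stdGaussianMat j)) one_pos hε hε'
    (by simpa using hN) (by simpa using hdim)
  rw [Fintype.card_fin] at h
  refine h.trans (measure_mono fun a ha u hu => ?_)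
  have hnorm : ‖WithLp.toLp 2 u‖ ≤ 1 := by
    rw [EuclideanSpace.norm_eq]
    simp [hu]
  have hinner (j : Fin m) :
      ⟪WithLp.toLp 2 (a j), WithLp.toLp 2 u⟫ = ∑ i, a j i * u i := by
    simp [PiLp.inner_apply, mul_comm]
  have hcard := ha (WithLp.toLp 2 u) hnorm
  simp_rw [hinner] at hcard
  rw [Finset.sum_boole, one_div_mul_eq_div]
  exact div_le_of_le_mul₀ m.cast_nonneg hε.le hcard

lemma dim_le_of_sample_size_ge {ε : ℝ} {m n : ℕ} (hε : 0 < ε) (hε' : ε ≤ 1 / 2)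
    (hm : 6 * ε⁻¹ ^ 2 * Real.log (1 / ε) * n ≤ m) : n ≤ ε * Real.log (1 / ε) * m := by
  have hL := half_le_log_one_div hε hε'
  set L := Real.log (1 / ε)
  have hεinv : 1 ≤ ε⁻¹ := (one_le_inv₀ hε).mpr (by linarith)
  calc (n : ℝ) ≤ 6 * (1 * (1 / 2) ^ 2) * n := by linarith [n.cast_nonneg (α := ℝ)]
    _ ≤ 6 * (ε⁻¹ * L ^ 2) * n := by gcongr
    _ = ε * L * (6 * ε⁻¹ ^ 2 * L * n) := by field_simp
    _ ≤ ε * L * m := by gcongr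

lemma sq_mul_le_mul_log_one_div_mul {ε : ℝ} (hε : 0 < ε) (hε' : ε ≤ 1 / 2) (m : ℕ) :
    ε ^ 2 * m ≤ ε * Real.log (1 / ε) * m := by
  rw [sq]
  gcongr
  exact hε'.trans (half_le_log_one_div hε hε')

end

/-- For `0 < ε ≤ 1/2`, `N ≥ C√(log(1/ε))` and `m ≥ C ε⁻² log(1/ε) n`, with
probability at least `1 − exp(−c ε² m)`, `(1/m)∑ⱼ 1{|aⱼᵀu| > N} ≤ ε` for all unit `u`. -/
theorem uniform_truncation_bound :
    ∃ C > (0 : ℝ), ∃ c > (0 : ℝ), ∀ ε : ℝ, 0 < ε → ε ≤ 1 / 2 →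
      ∀ N : ℝ, N ≥ C * Real.sqrt (Real.log (1 / ε)) → ∀ n m : ℕ,
      (m : ℝ) ≥ C * ε⁻¹ ^ 2 * Real.log (1 / ε) * n →
      stdGaussianMat m n {a | ∀ u : Fin n → ℝ, ∑ i, (u i) ^ 2 = 1 →
          (1 / (m : ℝ)) * ∑ j, (if N < |∑ i, a j i * u i| then (1 : ℝ) else 0) ≤ ε}
        ≥ ENNReal.ofReal (1 - Real.exp (-(c * ε ^ 2 * m))) := by
  refine ⟨6, by norm_num, 1, one_pos, fun ε hε hε' N hN n m hm =>
    le_trans (ENNReal.ofReal_le_ofReal ?_) (one_sub_exp_le_stdGaussianMat_truncation hε hε' hN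
      (dim_le_of_sample_size_ge hε hε' hm))⟩
  rw [one_mul]
  exact sub_le_sub_left
    (Real.exp_le_exp.mpr (neg_le_neg (sq_mul_le_mul_log_one_div_mul hε hε' m))) 1
end

section
/- If m ≥ C n, then with probability at least 1 − exp(−c m), (1/m) Σ_{j=1}^m (a_j^T u)^2 (a_j^T v)^2 ≥ c₁ > 0 for all unit vectors u, v ∈ R^n, where C, c, c₁ are absolute positive constants. -/
open MeasureTheory ProbabilityTheory

/-! If `⟪a j, u⟫` is tiny for at most a quarter of the indices `j`, and likewise for `v`, then both
are bounded below for half of the indices, which bounds the fourth moment. So it suffices to bound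
the soft count `S_K(u) = ∑ j, exp (-K ⟪a j, u⟫ ^ 2)` by `m / 4` for all unit vectors `u` at once.

Instead of a union bound over a net, integrate `exp (S_K)` over the shell `1 / 2 ≤ ‖θ‖ ≤ 2`. The
expectation of this integral is computed pointwise in `θ`, so Markov's inequality bounds the
integral with high probability. By Jensen's inequality on the ball of radius `r` around `u`, it
controls the average of `S_K` over that ball, at the price `n log (2 / r)` coming from the ratio of
volumes. This average is in turn at least `S_{2K}(u) - 2 K (r ^ 2 / n) ∑ j, ‖a j‖ ^ 2`, because a
uniform point of the ball has second moment at most `r ^ 2 / n` about `u` in every direction, and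
`∑ j, ‖a j‖ ^ 2 ≤ 3 m n` with high probability. Hence `r` can be an absolute constant, and the price
is absorbed as soon as `m ≥ C n`.
-/

open Module Metric Real
open scoped RealInnerProductSpace

section Probability

variable {α : Type*} [MeasurableSpace α] {μ : Measure α}

lemma integrable_exp_of_continuous_of_le [TopologicalSpace α] [OpensMeasurableSpace α]
    [IsFiniteMeasure μ] {f : α → ℝ} (hf : Continuous f) {B : ℝ} (hB : ∀ x, f x ≤ B) :
    Integrable (fun x => exp (f x)) μ :=
  .of_bound (by fun_prop) (exp B) (.of_forall fun x => by simpa using hB x)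

lemma ofReal_one_sub_le_measure_of_compl_subset [IsProbabilityMeasure μ] {s t : Set α} {p : ℝ}
    (hst : sᶜ ⊆ t) (ht : μ.real t ≤ p) : ENNReal.ofReal (1 - p) ≤ μ s := by
  have hcover : 1 ≤ μ.real s + μ.real t := by
    calc (1 : ℝ) = μ.real (s ∪ sᶜ) := by simp
      _ ≤ μ.real s + μ.real sᶜ := measureReal_union_le s sᶜ
      _ ≤ μ.real s + μ.real t := by
          gcongr
          exact measure_ne_top μ t
  rw [← ofReal_measureReal]
  exact ENNReal.ofReal_le_ofReal (by linarith)

lemma integral_exp_sum_pi_le {κ : Type*} [Fintype κ] [IsProbabilityMeasure μ] {f : α → ℝ}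
    (hf : AEStronglyMeasurable f μ) (hf₀ : ∀ x, 0 ≤ f x) (hf₁ : ∀ x, f x ≤ 1) :
    ∫ a : κ → α, exp (∑ j, f (a j)) ∂Measure.pi (fun _ => μ) ≤
      exp (2 * Fintype.card κ * ∫ x, f x ∂μ) := by
  have hint : Integrable f μ :=
    .of_bound hf 1 (.of_forall fun x => by simpa [abs_of_nonneg (hf₀ x)] using hf₁ x)
  have hexp (x : α) : exp (f x) ≤ 1 + 2 * f x := by
    have h := (abs_le.1 (abs_exp_sub_one_sub_id_le (abs_le.2 ⟨by linarith [hf₀ x], hf₁ x⟩))).2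
    nlinarith [hf₀ x, hf₁ x]
  have hone : ∫ x, exp (f x) ∂μ ≤ exp (2 * ∫ x, f x ∂μ) := by
    calc ∫ x, exp (f x) ∂μ ≤ ∫ x, (1 + 2 * f x) ∂μ :=
          integral_mono_of_nonneg (.of_forall fun x => (exp_pos _).le)
            ((integrable_const 1).add (hint.const_mul 2)) (.of_forall hexp)
      _ = 2 * ∫ x, f x ∂μ + 1 := by
          rw [integral_add (integrable_const 1) (hint.const_mul 2), integral_const_mul,
            integral_const, probReal_univ, one_smul, add_comm]
      _ ≤ exp (2 * ∫ x, f x ∂μ) := add_one_le_exp _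
  simp_rw [exp_sum]
  rw [integral_fintype_prod_eq_pow (fun x => exp (f x))]
  calc (∫ x, exp (f x) ∂μ) ^ Fintype.card κ ≤ exp (2 * ∫ x, f x ∂μ) ^ Fintype.card κ := by
        gcongr
    _ = exp (2 * Fintype.card κ * ∫ x, f x ∂μ) := by
        rw [← exp_nat_mul]
        ring_nf

lemma measureReal_mul_exp_setAverage_le {s t : Set α} {f : α → ℝ} (hst : s ⊆ t) (hs₀ : μ s ≠ 0)
    (hs : μ s ≠ ⊤) (hf : IntegrableOn f s μ) (hexp : IntegrableOn (fun x => exp (f x)) t μ) :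
    μ.real s * exp (⨍ x in s, f x ∂μ) ≤ ∫ x in t, exp (f x) ∂μ := by
  have hjensen : exp (⨍ x in s, f x ∂μ) ≤ ⨍ x in s, exp (f x) ∂μ :=
    convexOn_exp.map_set_average_le continuous_exp.continuousOn isClosed_univ hs₀ hs
      (.of_forall fun _ => Set.mem_univ _) hf (hexp.mono_set hst)
  calc μ.real s * exp (⨍ x in s, f x ∂μ) ≤ μ.real s * ⨍ x in s, exp (f x) ∂μ := by gcongr
    _ = ∫ x in s, exp (f x) ∂μ := measure_smul_setAverage _ hs
    _ ≤ ∫ x in t, exp (f x) ∂μ :=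
        setIntegral_mono_set hexp (.of_forall fun _ => (exp_pos _).le) hst.eventuallyLE

end Probability

section Gaussian

lemma integral_exp_mul_sq_gaussianReal (v : NNReal) {b : ℝ} (hb : 2 * b * v < 1) :
    ∫ x, exp (b * x ^ 2) ∂gaussianReal 0 v = (√(1 - 2 * b * v))⁻¹ := by
  rcases eq_or_ne v 0 with rfl | hv
  · simp
  have : (0 : ℝ) < v := by positivity
  have hpt (x : ℝ) : gaussianPDFReal 0 v x • exp (b * x ^ 2) =
      (√(2 * π * v))⁻¹ * exp (-((1 - 2 * b * v) / (2 * v)) * x ^ 2) := by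
    rw [gaussianPDFReal_def, smul_eq_mul, mul_assoc, ← exp_add]
    congr 2
    field_simp
    ring
  have : 1 - 2 * b * v ≠ 0 := by linarith
  rw [integral_gaussianReal_eq_integral_smul hv]
  simp_rw [hpt]
  rw [integral_const_mul, integral_gaussian, ← sqrt_inv, ← sqrt_mul (by positivity), ← sqrt_inv]
  congr 1
  field_simp

variable {E : Type*} [NormedAddCommGroup E] [InnerProductSpace ℝ E] [FiniteDimensional ℝ E]
  [MeasurableSpace E] [BorelSpace E]

lemma stdGaussian_map_inner (θ : E) :
    (stdGaussian E).map (fun x => ⟪θ, x⟫) = gaussianReal 0 (‖θ‖ ^ 2).toNNReal := by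
  have h := IsGaussian.map_eq_gaussianReal (μ := stdGaussian E) (innerSL ℝ θ)
  rwa [integral_strongDual_stdGaussian, variance_dual_stdGaussian, innerSL_apply_norm] at h

lemma integral_exp_mul_inner_sq_stdGaussian {b : ℝ} {θ : E} (hb : 2 * b * ‖θ‖ ^ 2 < 1) :
    ∫ x, exp (b * ⟪x, θ⟫ ^ 2) ∂stdGaussian E = (√(1 - 2 * b * ‖θ‖ ^ 2))⁻¹ := by
  have hvar : ((‖θ‖ ^ 2).toNNReal : ℝ) = ‖θ‖ ^ 2 := coe_toNNReal _ (sq_nonneg _)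
  have h := integral_exp_mul_sq_gaussianReal (‖θ‖ ^ 2).toNNReal (b := b) (by rwa [hvar])
  rw [← stdGaussian_map_inner, integral_map (by fun_prop) (by fun_prop), hvar] at h
  simpa only [real_inner_comm θ] using h

lemma integral_exp_mul_norm_sq_stdGaussian {b : ℝ} (hb : 2 * b < 1) :
    ∫ x, exp (b * ‖x‖ ^ 2) ∂stdGaussian E = (√(1 - 2 * b))⁻¹ ^ finrank ℝ E := by
  have hnorm (x : Fin (finrank ℝ E) → ℝ) :
      exp (b * ‖∑ i, x i • stdOrthonormalBasis ℝ E i‖ ^ 2) = ∏ i, exp (b * x i ^ 2) := by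
    rw [← exp_sum, ← Finset.mul_sum, ← (stdOrthonormalBasis ℝ E).sum_sq_inner_right]
    simp only [(stdOrthonormalBasis ℝ E).orthonormal.inner_right_fintype]
  rw [stdGaussian, integral_map (Measurable.aemeasurable (by fun_prop))
    (Measurable.aestronglyMeasurable (by fun_prop))]
  simp_rw [hnorm]
  rw [integral_fintype_prod_eq_pow (fun x => exp (b * x ^ 2)), Fintype.card_fin,
    integral_exp_mul_sq_gaussianReal 1 (by simpa using hb)]
  simp

lemma measureReal_pi_stdGaussian_sum_norm_sq_ge_le (κ : Type*) [Fintype κ] :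
    (Measure.pi fun _ : κ => stdGaussian E).real
        {a | 3 * Fintype.card κ * finrank ℝ E ≤ ∑ j, ‖a j‖ ^ 2} ≤
      exp (-(Fintype.card κ * finrank ℝ E / 4)) := by
  have hone : ∫ x, exp (1 / 4 * ‖x‖ ^ 2) ∂stdGaussian E = √2 ^ finrank ℝ E := by
    rw [integral_exp_mul_norm_sq_stdGaussian (by norm_num), ← sqrt_inv]
    norm_num
  have hint : Integrable (fun x => exp (1 / 4 * ‖x‖ ^ 2)) (stdGaussian E) :=
    not_imp_comm.1 integral_undef (by rw [hone]; positivity)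
  have hsqrt : √2 ≤ exp (1 / 2) := by
    rw [sqrt_le_left (exp_pos _).le, ← exp_nat_mul]
    linarith [add_one_le_exp (2 * (1 / 2) : ℝ)]
  have hchernoff := measure_ge_le_exp_mul_mgf (μ := Measure.pi fun _ : κ => stdGaussian E)
    (X := fun a => ∑ j, ‖a j‖ ^ 2) (t := 1 / 4) (3 * Fintype.card κ * finrank ℝ E) (by norm_num)
    (by simpa only [Finset.mul_sum, exp_sum] using Integrable.fintype_prod fun _ => hint)
  refine hchernoff.trans ?_
  simp_rw [mgf, Finset.mul_sum, exp_sum]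
  rw [integral_fintype_prod_eq_pow (fun x : E => exp (1 / 4 * ‖x‖ ^ 2)), hone]
  calc exp (-(1 / 4) * (3 * Fintype.card κ * finrank ℝ E)) * (√2 ^ finrank ℝ E) ^ Fintype.card κ
      ≤ exp (-(1 / 4) * (3 * Fintype.card κ * finrank ℝ E)) *
          (exp (1 / 2) ^ finrank ℝ E) ^ Fintype.card κ := by gcongr
    _ = exp (-(Fintype.card κ * finrank ℝ E / 4)) := by
        rw [← exp_nat_mul, ← exp_nat_mul, ← exp_add]
        ring_nf

end Gaussian

section Isotropy

variable {E : Type*} [NormedAddCommGroup E] [InnerProductSpace ℝ E] [FiniteDimensional ℝ E]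
  [MeasurableSpace E] [BorelSpace E]

lemma finrank_mul_integral_inner_sq {μ : Measure E}
    (hμ : ∀ e : E ≃ₗᵢ[ℝ] E, MeasurePreserving e μ μ) (hint : Integrable (fun θ => ‖θ‖ ^ 2) μ)
    (x : E) : finrank ℝ E * ∫ θ, ⟪x, θ⟫ ^ 2 ∂μ = ‖x‖ ^ 2 * ∫ θ, ‖θ‖ ^ 2 ∂μ := by
  have hsymm {y z : E} (hyz : ‖y‖ = ‖z‖) : ∫ θ, ⟪z, θ⟫ ^ 2 ∂μ = ∫ θ, ⟪y, θ⟫ ^ 2 ∂μ := by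
    let e := (ℝ ∙ (y - z))ᗮ.reflection
    have he : e y = z := Submodule.reflection_sub hyz
    rw [← (hμ e).integral_comp e.toHomeomorph.measurableEmbedding]
    simp_rw [← he, e.inner_map_map]
  have hint_inner (y : E) : Integrable (fun θ => ⟪y, θ⟫ ^ 2) μ :=
    (hint.const_mul (‖y‖ ^ 2)).mono' (by fun_prop) (.of_forall fun θ => by
      rw [norm_pow, ← mul_pow]
      gcongr
      exact norm_inner_le_norm y θ)
  let b := stdOrthonormalBasis ℝ E
  calc finrank ℝ E * ∫ θ, ⟪x, θ⟫ ^ 2 ∂μ = ∑ _i : Fin (finrank ℝ E), ∫ θ, ⟪x, θ⟫ ^ 2 ∂μ := by simp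
    _ = ∑ i, ∫ θ, ⟪‖x‖ • b i, θ⟫ ^ 2 ∂μ := by
        refine Finset.sum_congr rfl fun i _ => hsymm ?_
        simp [norm_smul]
    _ = ∫ θ, ‖x‖ ^ 2 * ‖θ‖ ^ 2 ∂μ := by
        rw [← integral_finsetSum _ fun i _ => hint_inner _]
        simp_rw [real_inner_smul_left, mul_pow, ← Finset.mul_sum, b.sum_sq_inner_right]
    _ = ‖x‖ ^ 2 * ∫ θ, ‖θ‖ ^ 2 ∂μ := integral_const_mul _ _

lemma finrank_mul_setIntegral_closedBall_inner_sub_sq_le (u x : E) (r : ℝ) :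
    finrank ℝ E * ∫ θ in closedBall u r, ⟪x, θ - u⟫ ^ 2 ≤
      ‖x‖ ^ 2 * r ^ 2 * volume.real (closedBall u r) := by
  have hcenter : ∫ θ in closedBall u r, ⟪x, θ - u⟫ ^ 2 = ∫ θ in closedBall 0 r, ⟪x, θ⟫ ^ 2 := by
    have hpreimage : (fun θ => θ - u) ⁻¹' closedBall 0 r = closedBall u r := by
      ext θ
      simp [dist_eq_norm]
    rw [← hpreimage]
    exact (measurePreserving_sub_right volume u).setIntegral_preimage_emb
      (measurableEmbedding_subRight u) (fun θ => ⟪x, θ⟫ ^ 2) (closedBall 0 r)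
  have hinvariant (e : E ≃ₗᵢ[ℝ] E) :
      MeasurePreserving e (volume.restrict (closedBall 0 r))
        (volume.restrict (closedBall 0 r)) := by
    simpa using e.measurePreserving.restrict_preimage (s := closedBall (0 : E) r)
      measurableSet_closedBall
  have hint : IntegrableOn (fun θ : E => ‖θ‖ ^ 2) (closedBall 0 r) :=
    ContinuousOn.integrableOn_compact (isCompact_closedBall 0 r) (by fun_prop)
  rw [hcenter, finrank_mul_integral_inner_sq hinvariant hint, mul_assoc]
  gcongr
  calc ∫ θ in closedBall (0 : E) r, ‖θ‖ ^ 2 ≤ ∫ θ in closedBall (0 : E) r, r ^ 2 := by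
        refine setIntegral_mono_on hint (integrableOn_const measure_closedBall_lt_top.ne)
          measurableSet_closedBall fun θ hθ => ?_
        gcongr
        simpa using hθ
    _ = r ^ 2 * volume.real (closedBall u r) := by
        simp [mul_comm, Measure.real, Measure.addHaar_closedBall_center volume u]

lemma measureReal_closedBall_pos (u : E) {r : ℝ} (hr : 0 < r) :
    0 < volume.real (closedBall u r) :=
  ENNReal.toReal_pos (measure_closedBall_pos volume u hr).ne' measure_closedBall_lt_top.ne

end Isotropy

section Shell

variable {E : Type*} [NormedAddCommGroup E]

/-- The shell `1 / 2 ≤ ‖θ‖ ≤ 2`, which contains the balls of radius at most `1 / 2` around all unit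
vectors. -/
def shell (E : Type*) [NormedAddCommGroup E] : Set E :=
  closedBall 0 2 \ ball 0 (1 / 2)

lemma measurableSet_shell [MeasurableSpace E] [OpensMeasurableSpace E] : MeasurableSet (shell E) :=
  measurableSet_closedBall.diff measurableSet_ball

lemma closedBall_subset_shell {u : E} (hu : ‖u‖ = 1) {r : ℝ} (hr : r ≤ 1 / 2) :
    closedBall u r ⊆ shell E := by
  intro θ hθ
  have hθu : ‖θ - u‖ ≤ 1 / 2 := (mem_closedBall_iff_norm.1 hθ).trans hr
  rw [shell, Set.mem_sdiff, mem_closedBall_zero_iff, mem_ball_zero_iff, not_lt]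
  constructor
  · linarith [norm_le_norm_add_norm_sub' θ u]
  · linarith [norm_le_norm_add_norm_sub θ u]

end Shell

section SoftCount

variable {E κ : Type*} [NormedAddCommGroup E] [InnerProductSpace ℝ E] [Fintype κ]

/-- A smooth proxy, decreasing in the sharpness `K`, for the number of vectors `a j` that are
nearly orthogonal to `θ`. -/
noncomputable def softCount (K : ℝ) (a : κ → E) (θ : E) : ℝ :=
  ∑ j, exp (-(K * ⟪a j, θ⟫ ^ 2))

lemma continuous_softCount (K : ℝ) : Continuous fun p : (κ → E) × E => softCount K p.1 p.2 := by
  unfold softCount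
  fun_prop

lemma continuous_softCount_right (K : ℝ) (a : κ → E) : Continuous (softCount K a) :=
  (continuous_softCount K).comp (.prodMk_right a)

lemma softCount_le_card {K : ℝ} (hK : 0 ≤ K) (a : κ → E) (θ : E) :
    softCount K a θ ≤ Fintype.card κ := by
  have h := Finset.sum_le_card_nsmul Finset.univ (fun j => exp (-(K * ⟪a j, θ⟫ ^ 2))) 1
    fun j _ => exp_le_one_iff.2 (neg_nonpos.2 (by positivity))
  simpa [softCount] using h

lemma softCount_two_mul_sub_le {K : ℝ} (hK : 0 ≤ K) (a : κ → E) (u θ : E) :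
    softCount (2 * K) a u - 2 * K * ∑ j, ⟪a j, θ - u⟫ ^ 2 ≤ softCount K a θ := by
  rw [softCount, softCount, Finset.mul_sum, ← Finset.sum_sub_distrib]
  refine Finset.sum_le_sum fun j _ => ?_
  set p := ⟪a j, u⟫
  set q := ⟪a j, θ - u⟫
  have hsplit : ⟪a j, θ⟫ = p + q := by rw [← inner_add_right, add_sub_cancel]
  calc exp (-(2 * K * p ^ 2)) - 2 * K * q ^ 2
      ≤ exp (-(2 * K * p ^ 2)) - exp (-(2 * K * p ^ 2)) * (2 * K * q ^ 2) :=
        sub_le_sub_left (mul_le_of_le_one_left (by positivity)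
          (exp_le_one_iff.2 (neg_nonpos.2 (by positivity)))) _
    _ = exp (-(2 * K * p ^ 2)) * (1 - 2 * K * q ^ 2) := by ring
    _ ≤ exp (-(2 * K * p ^ 2)) * exp (-(2 * K * q ^ 2)) := by
        gcongr
        exact one_sub_le_exp_neg _
    _ ≤ exp (-(K * ⟪a j, θ⟫ ^ 2)) := by
        rw [← exp_add, exp_le_exp, hsplit]
        nlinarith [mul_nonneg hK (sq_nonneg (p - q))]

lemma card_div_le_sum_inner_sq_mul_inner_sq {K : ℝ} (hK : 0 < K) {a : κ → E} {u v : E}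
    (hu : softCount K a u ≤ Fintype.card κ / 4) (hv : softCount K a v ≤ Fintype.card κ / 4) :
    Fintype.card κ / (2 * K ^ 2) ≤ ∑ j, ⟪a j, u⟫ ^ 2 * ⟪a j, v⟫ ^ 2 := by
  have hpt (j : κ) : 1 - exp (-(K * ⟪a j, u⟫ ^ 2)) - exp (-(K * ⟪a j, v⟫ ^ 2)) ≤
      K ^ 2 * (⟪a j, u⟫ ^ 2 * ⟪a j, v⟫ ^ 2) := by
    set p := exp (-(K * ⟪a j, u⟫ ^ 2))
    set q := exp (-(K * ⟪a j, v⟫ ^ 2))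
    have hq : q ≤ 1 := exp_le_one_iff.2 (neg_nonpos.2 (by positivity))
    calc 1 - p - q ≤ (1 - p) * (1 - q) := by
          linarith [mul_pos (exp_pos (-(K * ⟪a j, u⟫ ^ 2))) (exp_pos (-(K * ⟪a j, v⟫ ^ 2)))]
      _ ≤ (K * ⟪a j, u⟫ ^ 2) * (K * ⟪a j, v⟫ ^ 2) :=
          mul_le_mul (sub_le_comm.1 (one_sub_le_exp_neg _)) (sub_le_comm.1 (one_sub_le_exp_neg _))
            (sub_nonneg.2 hq) (by positivity)
      _ = K ^ 2 * (⟪a j, u⟫ ^ 2 * ⟪a j, v⟫ ^ 2) := by ring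
  have hsum : Fintype.card κ - softCount K a u - softCount K a v ≤
      K ^ 2 * ∑ j, ⟪a j, u⟫ ^ 2 * ⟪a j, v⟫ ^ 2 := by
    simpa [softCount, Finset.mul_sum] using Finset.sum_le_sum fun j (_ : j ∈ Finset.univ) => hpt j
  rw [div_le_iff₀ (by positivity)]
  linarith

variable [FiniteDimensional ℝ E] [MeasurableSpace E] [BorelSpace E]

lemma softCount_two_mul_sub_le_setAverage [Nontrivial E] {K : ℝ} (hK : 0 ≤ K) (a : κ → E) (u : E)
    {r : ℝ} (hr : 0 < r) :
    softCount (2 * K) a u - 2 * K * r ^ 2 / finrank ℝ E * ∑ j, ‖a j‖ ^ 2 ≤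
      ⨍ θ in closedBall u r, softCount K a θ := by
  have hcont := continuous_softCount_right K a
  have hvol : 0 < volume.real (closedBall u r) := measureReal_closedBall_pos u hr
  have hdim : (0 : ℝ) < finrank ℝ E := by exact_mod_cast finrank_pos
  have hint {f : E → ℝ} (hf : Continuous f) : IntegrableOn f (closedBall u r) :=
    hf.continuousOn.integrableOn_compact (isCompact_closedBall u r)
  have hinner (j : κ) : ∫ θ in closedBall u r, ⟪a j, θ - u⟫ ^ 2 ≤
      r ^ 2 / finrank ℝ E * ‖a j‖ ^ 2 * volume.real (closedBall u r) := by
    rw [div_mul_eq_mul_div, div_mul_eq_mul_div, le_div_iff₀' hdim, mul_comm (r ^ 2)]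
    exact finrank_mul_setIntegral_closedBall_inner_sub_sq_le u (a j) r
  rw [setAverage_eq, smul_eq_mul, inv_mul_eq_div, le_div_iff₀ hvol]
  calc (softCount (2 * K) a u - 2 * K * r ^ 2 / finrank ℝ E * ∑ j, ‖a j‖ ^ 2) *
        volume.real (closedBall u r)
      = softCount (2 * K) a u * volume.real (closedBall u r) -
          2 * K * ∑ j, r ^ 2 / finrank ℝ E * ‖a j‖ ^ 2 * volume.real (closedBall u r) := by
        rw [← Finset.sum_mul, ← Finset.mul_sum]
        ring
    _ ≤ softCount (2 * K) a u * volume.real (closedBall u r) -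
          2 * K * ∑ j, ∫ θ in closedBall u r, ⟪a j, θ - u⟫ ^ 2 := by
        gcongr with j
        exact hinner j
    _ = ∫ θ in closedBall u r, (softCount (2 * K) a u - 2 * K * ∑ j, ⟪a j, θ - u⟫ ^ 2) := by
        rw [integral_sub (hint (by fun_prop)) (hint (by fun_prop)), integral_const_mul,
          integral_finsetSum _ fun j _ => hint (by fun_prop), setIntegral_const, smul_eq_mul,
          mul_comm (volume.real _)]
    _ ≤ ∫ θ in closedBall u r, softCount K a θ :=
        integral_mono (hint (by fun_prop)) (hint hcont)
          fun θ => softCount_two_mul_sub_le hK a u θ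

/-- The integral of `exp (softCount K a)` over the shell, whose size controls the soft count near
all unit vectors at once. -/
noncomputable def softPartition (K : ℝ) (a : κ → E) : ℝ :=
  ∫ θ in shell E, exp (softCount K a θ)

lemma setAverage_softCount_le {K s : ℝ} {a : κ → E}
    (ha : softPartition K a ≤ volume.real (closedBall (0 : E) 2) * exp s) {u : E} (hu : ‖u‖ = 1)
    {r : ℝ} (hr : 0 < r) (hr' : r ≤ 1 / 2) :
    ⨍ θ in closedBall u r, softCount K a θ ≤ s + finrank ℝ E * log (2 / r) := by
  have hcont := continuous_softCount_right K a
  have hvol : 0 < volume.real (closedBall u r) := measureReal_closedBall_pos u hr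
  have hvol_ratio : volume.real (closedBall (0 : E) 2) =
      volume.real (closedBall u r) * (2 / r) ^ finrank ℝ E := by
    rw [Measure.addHaar_real_closedBall' volume u hr.le,
      Measure.addHaar_real_closedBall' volume 0 zero_le_two, div_pow]
    field_simp
  have hexp : IntegrableOn (fun θ => exp (softCount K a θ)) (shell E) :=
    (hcont.rexp.continuousOn.integrableOn_compact (isCompact_closedBall 0 2)).mono_set
      Set.sdiff_subset
  have hjensen := measureReal_mul_exp_setAverage_le (closedBall_subset_shell hu hr')
    (measure_closedBall_pos volume u hr).ne' measure_closedBall_lt_top.ne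
    (hcont.continuousOn.integrableOn_compact (isCompact_closedBall u r)) hexp
  have hbound : exp (⨍ θ in closedBall u r, softCount K a θ) ≤ (2 / r) ^ finrank ℝ E * exp s := by
    refine le_of_mul_le_mul_left ?_ hvol
    rw [← mul_assoc, ← hvol_ratio]
    exact hjensen.trans ha
  rwa [← exp_le_exp, add_comm s, exp_add, exp_nat_mul, exp_log (by positivity)]

lemma softCount_two_mul_le {K s : ℝ} (hK : 0 ≤ K) {a : κ → E}
    (ha : softPartition K a ≤ volume.real (closedBall (0 : E) 2) * exp s) {u : E} (hu : ‖u‖ = 1)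
    {r : ℝ} (hr : 0 < r) (hr' : r ≤ 1 / 2) :
    softCount (2 * K) a u ≤
      s + finrank ℝ E * log (2 / r) + 2 * K * r ^ 2 / finrank ℝ E * ∑ j, ‖a j‖ ^ 2 := by
  have : Nontrivial E := nontrivial_of_ne u 0 (norm_ne_zero_iff.1 (by simp [hu]))
  linarith [softCount_two_mul_sub_le_setAverage hK a u hr, setAverage_softCount_le ha hu hr hr']

end SoftCount

section SoftPartition

variable {E κ : Type*} [NormedAddCommGroup E] [InnerProductSpace ℝ E] [FiniteDimensional ℝ E]
  [MeasurableSpace E] [BorelSpace E] [Fintype κ]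

lemma volume_shell_ne_top : volume (shell E) ≠ ⊤ :=
  measure_ne_top_of_subset Set.sdiff_subset measure_closedBall_lt_top.ne

lemma integral_exp_softCount_le {K : ℝ} (hK : 0 ≤ K) (θ : E) :
    ∫ a : κ → E, exp (softCount K a θ) ∂Measure.pi (fun _ => stdGaussian E) ≤
      exp (2 * Fintype.card κ * (√(1 + 2 * K * ‖θ‖ ^ 2))⁻¹) := by
  have hneg : 2 * -K * ‖θ‖ ^ 2 < 1 := by nlinarith [mul_nonneg hK (sq_nonneg ‖θ‖)]
  have h := integral_exp_sum_pi_le (κ := κ) (μ := stdGaussian E)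
    (f := fun x => exp (-K * ⟪x, θ⟫ ^ 2)) (Measurable.aestronglyMeasurable (by fun_prop))
    (fun x => (exp_pos _).le)
    fun x => exp_le_one_iff.2 (mul_nonpos_of_nonpos_of_nonneg (neg_nonpos.2 hK) (sq_nonneg _))
  rw [integral_exp_mul_inner_sq_stdGaussian hneg] at h
  simpa [softCount] using h

lemma integrable_uncurry_exp_softCount {K : ℝ} (hK : 0 ≤ K) :
    Integrable (Function.uncurry fun (a : κ → E) θ => exp (softCount K a θ))
      ((Measure.pi fun _ => stdGaussian E).prod (volume.restrict (shell E))) := by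
  have : IsFiniteMeasure (volume.restrict (shell E)) :=
    isFiniteMeasure_restrict.2 volume_shell_ne_top
  exact integrable_exp_of_continuous_of_le (continuous_softCount K)
    fun p => softCount_le_card hK p.1 p.2

lemma integral_softPartition_le {K : ℝ} (hK : 0 ≤ K) :
    ∫ a : κ → E, softPartition K a ∂Measure.pi (fun _ => stdGaussian E) ≤
      volume.real (closedBall (0 : E) 2) * exp (2 * Fintype.card κ * (√(1 + K / 2))⁻¹) := by
  have hint := integrable_uncurry_exp_softCount (E := E) (κ := κ) hK
  have hpt (θ : E) (hθ : θ ∈ shell E) :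
      ∫ a : κ → E, exp (softCount K a θ) ∂Measure.pi (fun _ => stdGaussian E) ≤
        exp (2 * Fintype.card κ * (√(1 + K / 2))⁻¹) := by
    have hnorm : 1 / 2 ≤ ‖θ‖ := by simpa using hθ.2
    refine (integral_exp_softCount_le hK θ).trans ?_
    gcongr
    nlinarith [mul_le_mul_of_nonneg_left (pow_le_pow_left₀ (by norm_num) hnorm 2) hK]
  calc ∫ a : κ → E, softPartition K a ∂Measure.pi (fun _ => stdGaussian E)
      = ∫ θ in shell E,
          ∫ a : κ → E, exp (softCount K a θ) ∂Measure.pi (fun _ => stdGaussian E) :=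
        integral_integral_swap hint
    _ ≤ ∫ θ in shell E, exp (2 * Fintype.card κ * (√(1 + K / 2))⁻¹) :=
        setIntegral_mono_on hint.integral_prod_right (integrableOn_const volume_shell_ne_top)
          measurableSet_shell hpt
    _ ≤ volume.real (closedBall (0 : E) 2) * exp (2 * Fintype.card κ * (√(1 + K / 2))⁻¹) := by
        rw [setIntegral_const, smul_eq_mul]
        gcongr
        · exact measure_closedBall_lt_top.ne
        · exact Set.sdiff_subset

variable (κ) in
lemma measureReal_softPartition_ge_le {K : ℝ} (hK : 0 ≤ K) (t : ℝ) :
    (Measure.pi fun _ : κ => stdGaussian E).real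
        {a | volume.real (closedBall (0 : E) 2) *
          exp (2 * Fintype.card κ * (√(1 + K / 2))⁻¹ + t) ≤ softPartition K a} ≤ exp (-t) := by
  set A := volume.real (closedBall (0 : E) 2) * exp (2 * Fintype.card κ * (√(1 + K / 2))⁻¹)
  have hA : 0 < A := mul_pos (measureReal_closedBall_pos 0 two_pos) (exp_pos _)
  have hmarkov := mul_meas_ge_le_integral_of_nonneg
    (.of_forall fun a => integral_nonneg fun θ => (exp_pos _).le)
    (integrable_uncurry_exp_softCount (E := E) (κ := κ) hK).integral_prod_left (A * exp t)
  have hbound := hmarkov.trans (integral_softPartition_le hK)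
  simp_rw [exp_add, ← mul_assoc]
  rw [exp_neg, ← mul_le_mul_iff_right₀ (mul_pos hA (exp_pos t)),
    mul_inv_cancel_right₀ (exp_pos t).ne']
  exact hbound

end SoftPartition

section Main

variable {E κ : Type*} [NormedAddCommGroup E] [InnerProductSpace ℝ E] [FiniteDimensional ℝ E]
  [MeasurableSpace E] [BorelSpace E] [Fintype κ]

variable (κ) in
lemma measureReal_softPartition_510_ge_le :
    (Measure.pi fun _ : κ => stdGaussian E).real
        {a | volume.real (closedBall (0 : E) 2) * exp (3 * Fintype.card κ / 16) ≤
          softPartition 510 a} ≤ exp (-(Fintype.card κ / 16)) := by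
  have hsqrt : √(1 + 510 / 2) = 16 := by
    rw [show (1 + 510 / 2 : ℝ) = 16 ^ 2 by norm_num, sqrt_sq (by norm_num)]
  have hexponent : 3 * (Fintype.card κ : ℝ) / 16 =
      2 * Fintype.card κ * (√(1 + 510 / 2))⁻¹ + Fintype.card κ / 16 := by
    rw [hsqrt]
    ring
  rw [hexponent]
  exact measureReal_softPartition_ge_le κ (by norm_num) _

lemma softCount_le_card_div_four (hcard : 20480 * (finrank ℝ E : ℝ) ≤ Fintype.card κ) {a : κ → E}
    (hnorm : ∑ j, ‖a j‖ ^ 2 ≤ 3 * Fintype.card κ * finrank ℝ E)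
    (hpartition : softPartition 510 a ≤ volume.real (closedBall (0 : E) 2) *
      exp (3 * Fintype.card κ / 16)) {u : E} (hu : ‖u‖ = 1) :
    softCount 1020 a u ≤ Fintype.card κ / 4 := by
  have : Nontrivial E := nontrivial_of_ne u 0 (norm_ne_zero_iff.1 (by simp [hu]))
  have hdim : (0 : ℝ) < finrank ℝ E := by exact_mod_cast finrank_pos
  have hlog : finrank ℝ E * log (2 / (1 / 320)) ≤ Fintype.card κ / 32 := by
    have hlog640 : log (2 / (1 / 320)) ≤ 640 := (log_le_self (by norm_num)).trans (by norm_num)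
    linarith [mul_le_mul_of_nonneg_left hlog640 hdim.le]
  have hspread : 2 * 510 * (1 / 320) ^ 2 / finrank ℝ E * ∑ j, ‖a j‖ ^ 2 ≤
      Fintype.card κ / 32 := by
    rw [div_mul_eq_mul_div, div_le_iff₀ hdim]
    have hcard_mul : (0 : ℝ) ≤ Fintype.card κ * finrank ℝ E := by positivity
    linarith
  have hcount := softCount_two_mul_le (r := 1 / 320) (by norm_num) hpartition hu (by norm_num)
    (by norm_num)
  rw [show (1020 : ℝ) = 2 * 510 by norm_num]
  linarith

lemma exp_neg_div_four_add_exp_neg_div_sixteen_le {m n : ℝ} (hn : 1 ≤ n) (hm : 32 ≤ m) :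
    exp (-(m * n / 4)) + exp (-(m / 16)) ≤ exp (-(m / 32)) := by
  have hfirst : exp (-(m * n / 4)) ≤ exp (-(m / 16)) := exp_le_exp.2 (by nlinarith)
  have htwo : 2 ≤ exp (m / 32) := by linarith [add_one_le_exp (m / 32)]
  calc exp (-(m * n / 4)) + exp (-(m / 16)) ≤ 2 * exp (-(m / 16)) := by linarith
    _ ≤ exp (m / 32) * exp (-(m / 16)) := by gcongr
    _ = exp (-(m / 32)) := by
        rw [← exp_add]
        ring_nf

theorem mixed_fourth_moment_lower_bound_general
    (hcard : 20480 * (finrank ℝ E : ℝ) ≤ Fintype.card κ) :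
    ENNReal.ofReal (1 - exp (-(Fintype.card κ / 32))) ≤ (Measure.pi fun _ : κ => stdGaussian E)
      {a | ∀ u v : E, ‖u‖ = 1 → ‖v‖ = 1 →
        1 / (2 * 1020 ^ 2) ≤ 1 / (Fintype.card κ : ℝ) * ∑ j, ⟪a j, u⟫ ^ 2 * ⟪a j, v⟫ ^ 2} := by
  rcases subsingleton_or_nontrivial E with hE | hE
  · have hunit (u : E) : ‖u‖ ≠ 1 := by simp [Subsingleton.elim u 0]
    simp [hunit, exp_nonneg]
  have hdim : (1 : ℝ) ≤ finrank ℝ E := by exact_mod_cast finrank_pos (R := ℝ) (M := E)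
  have hcard_pos : (0 : ℝ) < Fintype.card κ := by linarith
  have hbad : (Measure.pi fun _ : κ => stdGaussian E).real
      ({a | 3 * Fintype.card κ * finrank ℝ E ≤ ∑ j, ‖a j‖ ^ 2} ∪
        {a | volume.real (closedBall (0 : E) 2) * exp (3 * Fintype.card κ / 16) ≤
          softPartition 510 a}) ≤ exp (-(Fintype.card κ / 32)) :=
    calc _ ≤ exp (-(Fintype.card κ * finrank ℝ E / 4)) + exp (-(Fintype.card κ / 16)) :=
          (measureReal_union_le _ _).trans (add_le_add
            (measureReal_pi_stdGaussian_sum_norm_sq_ge_le κ)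
            (measureReal_softPartition_510_ge_le κ))
      _ ≤ exp (-(Fintype.card κ / 32)) :=
          exp_neg_div_four_add_exp_neg_div_sixteen_le hdim (by linarith)
  refine ofReal_one_sub_le_measure_of_compl_subset (Set.compl_subset_comm.1 fun a ha => ?_) hbad
  simp only [Set.mem_compl_iff, Set.mem_union, Set.mem_ofPred_eq, not_or, not_le] at ha
  intro u v hu hv
  have hcount {w : E} (hw : ‖w‖ = 1) : softCount 1020 a w ≤ Fintype.card κ / 4 :=
    softCount_le_card_div_four hcard ha.1.le ha.2.le hw
  have hsum := card_div_le_sum_inner_sq_mul_inner_sq (by norm_num) (hcount hu) (hcount hv)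
  rw [one_div_mul_eq_div, le_div_iff₀ hcard_pos]
  exact (one_div_mul_eq_div _ _).trans_le hsum

end Main

lemma measurePreserving_toLp_stdGaussianMat (m n : ℕ) :
    MeasurePreserving (MeasurableEquiv.piCongrRight fun _ : Fin m => .toLp 2 (Fin n → ℝ))
      (stdGaussianMat m n) (Measure.pi fun _ => stdGaussian (EuclideanSpace ℝ (Fin n))) :=
  measurePreserving_pi _ _ fun _ => ⟨(MeasurableEquiv.toLp 2 _).measurable, map_pi_eq_stdGaussian⟩

lemma stdGaussianMat_setOf_forall_unit (m n : ℕ) (c : ℝ) :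
    stdGaussianMat m n {a | ∀ u v : Fin n → ℝ, ∑ i, (u i) ^ 2 = 1 → ∑ i, (v i) ^ 2 = 1 →
      (1 / (m : ℝ)) * ∑ j, (∑ i, a j i * u i) ^ 2 * (∑ i, a j i * v i) ^ 2 ≥ c} =
    (Measure.pi fun _ : Fin m => stdGaussian (EuclideanSpace ℝ (Fin n)))
      {a | ∀ u v : EuclideanSpace ℝ (Fin n), ‖u‖ = 1 → ‖v‖ = 1 →
        c ≤ 1 / (m : ℝ) * ∑ j, ⟪a j, u⟫ ^ 2 * ⟪a j, v⟫ ^ 2} := by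
  rw [← (measurePreserving_toLp_stdGaussianMat m n).measure_preimage_equiv]
  congr 1
  ext a
  have hrow (j : Fin m) : MeasurableEquiv.piCongrRight (fun _ => .toLp 2 (Fin n → ℝ)) a j =
      WithLp.toLp 2 (a j) := rfl
  simp [(WithLp.equiv 2 (Fin n → ℝ)).forall_congr_left, EuclideanSpace.norm_eq, PiLp.inner_apply,
    hrow, mul_comm]

/-- If `m ≥ C n` then with probability at least `1 − exp(−c m)`,
`(1/m)∑ⱼ(aⱼᵀu)²(aⱼᵀv)² ≥ c₁ > 0` for all unit vectors `u, v`. -/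
theorem mixed_fourth_moment_lower_bound :
    ∃ C > (0 : ℝ), ∃ c > (0 : ℝ), ∃ c₁ > (0 : ℝ), ∀ n m : ℕ,
      (m : ℝ) ≥ C * n →
      stdGaussianMat m n {a | ∀ u v : Fin n → ℝ,
          ∑ i, (u i) ^ 2 = 1 → ∑ i, (v i) ^ 2 = 1 →
          (1 / (m : ℝ)) * ∑ j, (∑ i, a j i * u i) ^ 2 * (∑ i, a j i * v i) ^ 2 ≥ c₁}
        ≥ ENNReal.ofReal (1 - Real.exp (-(c * m))) := by
  refine ⟨20480, by norm_num, 1 / 32, by norm_num, 1 / (2 * 1020 ^ 2), by norm_num,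
    fun n m hm => ?_⟩
  rw [stdGaussianMat_setOf_forall_unit, one_div_mul_eq_div]
  simpa using mixed_fourth_moment_lower_bound_general (E := EuclideanSpace ℝ (Fin n)) (κ := Fin m)
    (by simpa using hm)
end
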